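/- Let K = ℚ(α) be the number field generated by a root α of the irreducible polynomial x³ − 17279·x² − 17282·x − 1. Then the 2-rank of the class group of K is 6; that is, the dimension over 𝔽₂ of ClassGroup(𝒪_K)/2·ClassGroup(𝒪_K) equals 6 (equivalently, the subgroup of ideal classes of order dividing 2 has cardinality 2⁶). -/

import Mathlib

section ClassLower

variable {O : Type*} [CommRing O] [IsDedekindDomain O]

/-- A principal ideal generated by a factor of an `ℓ`-th power, prime to its cofactor,
is an `ℓ`-th power. -/
lemma exists_ideal_pow_eq (l : ℕ) {g d n : O} (h : g * d = n ^ l) (hc : IsCoprime g d) :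
    ∃ I : Ideal O, I ^ l = Ideal.span {g} := by
  have h1 : Ideal.span {g} * Ideal.span {d} = (Ideal.span {n}) ^ l := by
    rw [Ideal.span_singleton_mul_span_singleton, h, Ideal.span_singleton_pow]
  have h2 : IsCoprime (Ideal.span {g}) (Ideal.span {d}) := by
    rwa [Ideal.isCoprime_span_singleton_iff]
  obtain ⟨I, hI⟩ := exists_eq_pow_of_mul_eq_pow_of_coprime h2 h1
  exact ⟨I, hI.symm⟩

/-- If the ideals `I i` have `ℓ`-th powers generated by `g i`, and there are `ℓ`-th power residue
tests separating the `g i` and killing the units, then the classes are independent. -/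
lemma dvd_of_prod_mk0_eq_one {ι : Type*} [Fintype ι] [DecidableEq ι] {l : ℕ} (hl : l.Prime)
    (I : ι → (nonZeroDivisors (Ideal O))) (g : ι → O)
    (hI : ∀ i, (I i : Ideal O) ^ l = Ideal.span {g i})
    (F : ι → Type*) [∀ i, Field (F i)] (ψ : ∀ i, O →+* F i) (e : ι → ℕ)
    (hferm : ∀ i, ∀ x : F i, x ≠ 0 → x ^ (l * e i) = 1)
    (hunit : ∀ i, ∀ u : Oˣ, ψ i u ^ e i = 1)
    (hoff : ∀ i j, j ≠ i → ψ i (g j) ^ e i = 1)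
    (hne : ∀ i j, ψ i (g j) ≠ 0)
    (hdiag : ∀ i, ψ i (g i) ^ e i ≠ 1)
    (x : ι → ℕ) (hx : ∏ i, ClassGroup.mk0 (I i) ^ x i = 1) (i : ι) : l ∣ x i := by
  have h1 : ClassGroup.mk0 (∏ i, I i ^ x i) = 1 := by
    rw [map_prod]; simpa using hx
  rw [ClassGroup.mk0_eq_one_iff] at h1
  obtain ⟨d, hd⟩ := h1
  have h2 : Ideal.span {∏ i, g i ^ x i} = Ideal.span {d ^ l} := by
    rw [← Ideal.span_singleton_pow, ← Ideal.submodule_span_eq, ← Ideal.submodule_span_eq, ← hd,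
      Ideal.submodule_span_eq, ← Ideal.prod_span_singleton]
    rw [SubmonoidClass.coe_finsetProd, ← Finset.prod_pow]
    refine Finset.prod_congr rfl fun i _ => ?_
    rw [← Ideal.span_singleton_pow, ← hI]
    simp [← pow_mul, mul_comm]
  rw [Ideal.span_singleton_eq_span_singleton] at h2
  obtain ⟨u, hu⟩ := h2
  have h3 := congrArg (fun z => ψ i z ^ e i) hu
  simp only [map_mul, map_prod, map_pow, mul_pow, hunit, mul_one] at h3
  have hd0 : ψ i d ≠ 0 := by
    intro h0
    have := congrArg (ψ i) hu
    simp only [map_mul, map_prod, map_pow, h0, zero_pow hl.ne_zero] at this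
    have hu0 : ψ i (u : O) ≠ 0 := (u.isUnit.map (ψ i)).ne_zero
    rcases mul_eq_zero.mp this with h | h
    · rw [Finset.prod_eq_zero_iff] at h
      obtain ⟨j, _, hj⟩ := h
      exact hne i j (eq_zero_of_pow_eq_zero hj)
    · exact hu0 h
  rw [← pow_mul, hferm i _ hd0, ← Finset.prod_pow, Finset.prod_eq_single i] at h3
  · rw [← pow_mul, mul_comm, pow_mul] at h3
    have h4 : (ψ i (g i) ^ e i) ^ l = 1 := by
      rw [← pow_mul, mul_comm]; exact hferm i _ (hne i i)
    have h5 : orderOf (ψ i (g i) ^ e i) = l := by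
      have : Fact l.Prime := ⟨hl⟩
      exact orderOf_eq_prime h4 (hdiag i)
    rw [← h5]
    exact orderOf_dvd_of_pow_eq_one h3
  · intro j _ hj
    rw [← pow_mul, mul_comm, pow_mul, hoff i j hj, one_pow]
  · simp

end ClassLower

section GroupCount

/-- Independent elements of order `ℓ` in a finite commutative group. -/
lemma pow_dvd_card_torsion {G : Type*} [CommGroup G] [Finite G] {l r : ℕ} (hl : l.Prime)
    (c : Fin r → G) (hc : ∀ i, c i ^ l = 1)
    (hind : ∀ x : Fin r → ℕ, ∏ i, c i ^ x i = 1 → ∀ i, l ∣ x i) :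
    l ^ r ∣ Nat.card (powMonoidHom l : G →* G).ker := by
  have : Fact l.Prime := ⟨hl⟩
  have hp : IsPGroup l (powMonoidHom l : G →* G).ker := by
    intro g
    refine ⟨1, ?_⟩
    have := g.2
    rw [MonoidHom.mem_ker, powMonoidHom_apply] at this
    ext; simpa using this
  obtain ⟨k, hk⟩ := IsPGroup.iff_card.mp hp
  rw [hk]
  refine pow_dvd_pow l ?_
  rw [← Nat.pow_le_pow_iff_right hl.one_lt, ← hk]
  let φ : (Fin r → Fin l) → (powMonoidHom l : G →* G).ker := fun x =>
    ⟨∏ i, c i ^ (x i : ℕ), by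
      rw [MonoidHom.mem_ker, powMonoidHom_apply, ← Finset.prod_pow]
      refine Finset.prod_eq_one fun i _ => ?_
      rw [← pow_mul, mul_comm, pow_mul, hc, one_pow]⟩
  have hφ : Function.Injective φ := by
    intro x y hxy
    have h1 : ∏ i, c i ^ (x i : ℕ) = ∏ i, c i ^ (y i : ℕ) := congrArg Subtype.val hxy
    have h2 := hind (fun i => x i + (l - y i)) (by
      simp only [pow_add, Finset.prod_mul_distrib, h1]
      rw [← Finset.prod_mul_distrib]
      refine Finset.prod_eq_one fun i _ => ?_
      rw [← pow_add, Nat.add_sub_cancel' (y i).2.le, hc])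
    funext i
    have h3 := h2 i
    have hx := (x i).2
    have hy := (y i).2
    obtain ⟨m, hm⟩ := h3
    ext
    have : m = 1 := by
      rcases m with _ | _ | m
      · simp at hm; omega
      · rfl
      · exfalso; have : l * (m + 1 + 1) = l * m + 2 * l := by ring
        have h0 : 0 ≤ l * m := Nat.zero_le _
        omega
    subst this
    omega
  have := Nat.card_le_card_of_injective φ hφ
  simpa using this

end GroupCount


section FieldBasics

set_option linter.unusedSectionVars false
set_option linter.unusedVariables false

open NumberField Polynomial Module
open scoped Matrix

/-- The simplest cubic polynomial over `ℤ`. -/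
noncomputable def shanksPoly : ℤ[X] := X ^ 3 - 17279 * X ^ 2 - 17282 * X - 1

lemma shanksPoly_natDegree : shanksPoly.natDegree = 3 := by
  unfold shanksPoly; compute_degree!

lemma shanksPoly_monic : shanksPoly.Monic := by
  unfold shanksPoly; monicity!

lemma shanksPoly_irreducible : Irreducible shanksPoly := by
  refine shanksPoly_monic.irreducible_of_irreducible_map (Int.castRingHom (ZMod 2)) _ ?_
  have hm : (shanksPoly.map (Int.castRingHom (ZMod 2))).Monic := shanksPoly_monic.map _
  have hd : (shanksPoly.map (Int.castRingHom (ZMod 2))).natDegree = 3 := by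
    rw [shanksPoly_monic.natDegree_map, shanksPoly_natDegree]
  rw [hm.irreducible_iff_roots_eq_zero_of_degree_le_three (by omega) (by omega)]
  rw [Multiset.eq_zero_iff_forall_notMem]
  intro a ha
  rw [mem_roots hm.ne_zero, IsRoot.def] at ha
  revert ha
  simp only [shanksPoly, Polynomial.map_sub, Polynomial.map_mul, Polynomial.map_pow,
    Polynomial.map_X, Polynomial.map_ofNat, Polynomial.map_one, eval_sub, eval_mul, eval_pow,
    eval_X, eval_ofNat, eval_one]
  revert a
  decide

/-- Fast modular exponentiation. -/
def powm (p : ℕ) : ℕ → ℕ → ℕ → ℕ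
  | 0, _, _ => 1 % p
  | k + 1, a, n => cond (n % 2 == 1) (a * powm p k (a * a % p) (n / 2) % p)
      (powm p k (a * a % p) (n / 2))

lemma powm_eq (p k : ℕ) : ∀ a n : ℕ, n < 2 ^ k → powm p k a n = a ^ n % p := by
  induction k with
  | zero => intro a n hn; have : n = 0 := by simpa using hn
            subst this; rfl
  | succ k ih =>
    intro a n hn
    have h1 : n / 2 < 2 ^ k := by rw [pow_succ] at hn; omega
    have h2 : (a * a % p) ^ (n / 2) % p = a ^ (2 * (n / 2)) % p := by
      rw [← Nat.pow_mod, pow_mul, pow_two]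
    rcases Nat.mod_two_eq_zero_or_one n with h | h
    · rw [powm, h, ih _ _ h1, h2]
      have : 2 * (n / 2) = n := by omega
      rw [this]; rfl
    · rw [powm, h, ih _ _ h1, h2]
      have : n = 2 * (n / 2) + 1 := by omega
      conv_rhs => rw [this, pow_succ, mul_comm, Nat.mul_mod]
      simp [Nat.mul_mod]

lemma zmod_pow_powm (p k a n : ℕ) (hn : n < 2 ^ k) :
    ((a : ℕ) : ZMod p) ^ n = ((powm p k a n : ℕ) : ZMod p) := by
  rw [powm_eq p k a n hn, ZMod.natCast_mod, Nat.cast_pow]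

lemma shanks_prime_aux : Nat.Prime 49769281 := by norm_num

lemma shanks_prime : Nat.Prime 298615687 := by
  have key : ∀ n, n < 2 ^ 30 → powm 298615687 30 3 n ≠ 1 →
      ((3 : ℕ) : ZMod 298615687) ^ n ≠ 1 := by
    intro n h1 h2 h3
    rw [← Nat.cast_pow, ← Nat.cast_one, ZMod.natCast_eq_natCast_iff', ← powm_eq _ 30 _ _ h1] at h3
    exact h2 h3
  refine lucas_primality _ ((3 : ℕ) : ZMod 298615687) ?_ ?_
  · rw [zmod_pow_powm _ 30 _ _ (by norm_num),
      show powm 298615687 30 3 (298615687 - 1) = 1 by decide +kernel]; simp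
  · intro q hq hd
    have h : q ∣ 2 * (3 * 49769281) := by norm_num at hd ⊢; exact hd
    have : q = 2 ∨ q = 3 ∨ q = 49769281 := by
      rcases (Nat.Prime.dvd_mul hq).1 h with h | h
      · left; exact (Nat.prime_dvd_prime_iff_eq hq Nat.prime_two).1 h
      rcases (Nat.Prime.dvd_mul hq).1 h with h | h
      · right; left; exact (Nat.prime_dvd_prime_iff_eq hq Nat.prime_three).1 h
      · right; right; exact (Nat.prime_dvd_prime_iff_eq hq shanks_prime_aux).1 h
    rcases this with rfl | rfl | rfl
    · exact key _ (by norm_num) (by decide +kernel)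
    · exact key _ (by norm_num) (by decide +kernel)
    · exact key _ (by norm_num) (by decide +kernel)

variable {K : Type*} [Field K] [NumberField K]

lemma shanks_aeval {A : Type*} [CommRing A] (x : A) :
    aeval x shanksPoly = x ^ 3 - 17279 * x ^ 2 - 17282 * x - 1 := by
  simp only [shanksPoly, map_sub, map_mul, map_pow, aeval_X, map_ofNat, map_one]

lemma shanks_isIntegral {A : Type*} [CommRing A] {x : A}
    (hx : x ^ 3 - 17279 * x ^ 2 - 17282 * x - 1 = 0) : IsIntegral ℤ x :=
  ⟨shanksPoly, shanksPoly_monic, by rw [← aeval_def, shanks_aeval, hx]⟩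

lemma shanks_minpoly_int {A : Type*} [CommRing A] [IsDomain A] [CharZero A] {x : A}
    (hx : x ^ 3 - 17279 * x ^ 2 - 17282 * x - 1 = 0) : minpoly ℤ x = shanksPoly := by
  symm
  have h1 : minpoly ℤ x ∣ shanksPoly :=
    minpoly.isIntegrallyClosed_dvd (shanks_isIntegral hx) (by rw [shanks_aeval, hx])
  have h2 := (minpoly.prime_of_isIntegrallyClosed (shanks_isIntegral hx)).irreducible
  have := (h2.associated_of_dvd shanksPoly_irreducible h1)
  exact (eq_of_monic_of_associated (minpoly.monic (shanks_isIntegral hx)) shanksPoly_monic this).symm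

lemma shanks_minpoly_rat {x : K}
    (hx : x ^ 3 - 17279 * x ^ 2 - 17282 * x - 1 = 0) :
    minpoly ℚ x = shanksPoly.map (algebraMap ℤ ℚ) := by
  rw [minpoly.isIntegrallyClosed_eq_field_fractions' ℚ (shanks_isIntegral hx), shanks_minpoly_int hx]

/-- The three real roots. -/
lemma shanks_roots : ∃ r : Fin 3 → ℝ,
    (∀ i, r i ^ 3 - 17279 * r i ^ 2 - 17282 * r i - 1 = 0) ∧
    17280 < r 0 ∧ r 0 < 17281 ∧ -1/17280 < r 1 ∧ r 1 < 0 ∧ -1 - 1/17280 < r 2 ∧ r 2 < -1 := by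
  have hc : Continuous (fun x : ℝ => x ^ 3 - 17279 * x ^ 2 - 17282 * x - 1) := by fun_prop
  obtain ⟨r0, ⟨h1, h2⟩, h3⟩ := intermediate_value_Ioo (a := (17280:ℝ)) (b := 17281) (by norm_num)
    hc.continuousOn (show (0:ℝ) ∈ Set.Ioo _ _ by constructor <;> norm_num)
  obtain ⟨r1, ⟨h4, h5⟩, h6⟩ := intermediate_value_Ioo' (a := (-1/17280:ℝ)) (b := 0) (by norm_num)
    hc.continuousOn (show (0:ℝ) ∈ Set.Ioo _ _ by constructor <;> norm_num)
  obtain ⟨r2, ⟨h7, h8⟩, h9⟩ := intermediate_value_Ioo (a := (-1-1/17280:ℝ)) (b := -1) (by norm_num)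
    hc.continuousOn (show (0:ℝ) ∈ Set.Ioo _ _ by constructor <;> norm_num)
  refine ⟨![r0, r1, r2], ?_, h1, h2, h4, h5, h7, h8⟩
  intro i
  fin_cases i
  · exact h3
  · exact h6
  · exact h9

variable {α : K} (hα : α ^ 3 - 17279 * α ^ 2 - 17282 * α - 1 = 0)
  (hgen : Algebra.adjoin ℚ {α} = ⊤)

include hα hgen

lemma shanks_finrank : finrank ℚ K = 3 := by
  have hi : IsIntegral ℚ α := Algebra.IsIntegral.isIntegral α
  rw [(PowerBasis.ofAdjoinEqTop hi hgen).finrank, PowerBasis.ofAdjoinEqTop_dim,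
    shanks_minpoly_rat hα, shanksPoly_monic.natDegree_map, shanksPoly_natDegree]

lemma shanks_exists_lift {E : Type*} [Field E] [Algebra ℚ E] {r : E}
    (hr : r ^ 3 - 17279 * r ^ 2 - 17282 * r - 1 = 0) : ∃ φ : K →ₐ[ℚ] E, φ α = r := by
  have hi : IsIntegral ℚ α := Algebra.IsIntegral.isIntegral α
  let pb := PowerBasis.ofAdjoinEqTop hi hgen
  have hg : pb.gen = α := PowerBasis.ofAdjoinEqTop_gen _ _
  have h : aeval r (minpoly ℚ pb.gen) = 0 := by
    rw [hg, shanks_minpoly_rat hα, aeval_map_algebraMap, shanks_aeval, hr]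
  refine ⟨pb.lift r h, ?_⟩
  conv_lhs => rw [← hg]
  exact pb.lift_gen r h

omit hα in
lemma shanks_ext {E : Type*} [Field E] [Algebra ℚ E] (f g : K →ₐ[ℚ] E) (h : f α = g α) : f = g :=
  AlgHom.ext_of_adjoin_eq_top hgen (by intro x hx; rw [Set.mem_singleton_iff.1 hx]; exact h)

lemma shanks_embeddings : ∃ φ : Fin 3 → (K →ₐ[ℚ] ℝ),
    (17280 < φ 0 α ∧ φ 0 α < 17281 ∧ -1/17280 < φ 1 α ∧ φ 1 α < 0 ∧
      -1 - 1/17280 < φ 2 α ∧ φ 2 α < -1) ∧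
    ∃ e : Fin 3 ≃ (K →ₐ[ℚ] ℂ), ∀ i x, e i x = ((φ i x : ℝ) : ℂ) := by
  obtain ⟨r, hr, h⟩ := shanks_roots
  choose φ hφ using fun i => shanks_exists_lift hα hgen (hr i)
  refine ⟨φ, by simpa only [hφ] using h, ?_⟩
  let F : Fin 3 → (K →ₐ[ℚ] ℂ) := fun i => (Complex.ofRealAm.restrictScalars ℚ).comp (φ i)
  have hF : ∀ i x, F i x = ((φ i x : ℝ) : ℂ) := fun i x => rfl
  have hinj : Function.Injective F := by
    intro i j hij
    have : r i = r j := by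
      have := congrArg (fun g => g α) hij
      simpa [hF, hφ] using this
    obtain ⟨h1, h2, h3, h4, h5, h6⟩ := h
    fin_cases i <;> fin_cases j <;> simp_all <;> exfalso <;> linarith
  have hcard : Fintype.card (Fin 3) = Fintype.card (K →ₐ[ℚ] ℂ) := by
    rw [AlgHom.card ℚ K ℂ, shanks_finrank hα hgen, Fintype.card_fin]
  exact ⟨Equiv.ofBijective F ((Fintype.bijective_iff_injective_and_card F).2 ⟨hinj, hcard⟩), hF⟩

omit hα hgen in
/-- The discriminant of `1, x, x²` is a square times the discriminant of the field. -/
lemma shanks_discr (φ : Fin 3 → (K →ₐ[ℚ] ℝ)) (e : Fin 3 ≃ (K →ₐ[ℚ] ℂ))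
    (he : ∀ i x, e i x = ((φ i x : ℝ) : ℂ)) (b : Basis (Fin 3) ℤ (𝓞 K)) (x : 𝓞 K) :
    ((φ 1 x - φ 0 x) * (φ 2 x - φ 0 x) * (φ 2 x - φ 1 x)) ^ 2 =
      (((b.toMatrix ![1, x, x ^ 2]).det : ℤ) : ℝ) ^ 2 * (discr K : ℝ) := by
  have h1 := Algebra.discr_eq_det_embeddingsMatrixReindex_pow_two ℚ ℂ
    (fun i => (b i : K)) e
  have hb : (fun i => (b i : K)) = b.localizationLocalization ℚ (nonZeroDivisors ℤ) K := by
    ext i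
    exact (Basis.localizationLocalization_apply ℚ (nonZeroDivisors ℤ) K b i).symm
  have h2 : Algebra.discr ℚ (fun i => (b i : K)) = (discr K : ℚ) := by
    rw [← discr_eq_discr K b, hb]
    exact Algebra.discr_localizationLocalization ℤ (nonZeroDivisors ℤ) K b
  rw [h2] at h1
  set P := b.toMatrix ![1, x, x ^ 2] with hP
  have hv : ∀ j, ((![1, x, x ^ 2] : Fin 3 → 𝓞 K) j : K) = ∑ i, (P i j : K) * (b i : K) := by
    intro j
    have := b.sum_toMatrix_smul_self ![1, x, x ^ 2] j
    rw [← this]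
    simp [hP, zsmul_eq_mul]
  have hM : (Matrix.vandermonde fun i => e i (x : K))ᵀ =
      (P.map (Int.castRingHom ℂ))ᵀ *
        (Algebra.embeddingsMatrixReindex ℚ ℂ (fun i => (b i : K)) e) := by
    ext j i
    have h := congrArg (e i) (hv j)
    rw [map_sum] at h
    simp only [map_mul, map_intCast] at h
    rw [Matrix.mul_apply]
    simp only [Matrix.transpose_apply, Matrix.map_apply, Algebra.embeddingsMatrixReindex,
      Matrix.reindex_apply, Matrix.submatrix_apply, Algebra.embeddingsMatrix_apply,
      Equiv.refl_symm, Equiv.refl_apply, Equiv.symm_symm, Matrix.vandermonde_apply, eq_intCast]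
    rw [← h]
    fin_cases j <;> simp
  have hdet := congrArg Matrix.det hM
  rw [Matrix.det_transpose, Matrix.det_mul, Matrix.det_transpose, Matrix.det_vandermonde,
    ← RingHom.mapMatrix_apply, ← RingHom.map_det] at hdet
  have h4 := congrArg (fun t => t ^ 2) hdet
  simp only [mul_pow, ← h1] at h4
  simp only [he] at h4
  have h5 : ∀ f : Fin 3 → Fin 3 → ℂ, ∏ i : Fin 3, ∏ j ∈ Finset.Ioi i, f i j =
      f 0 1 * f 0 2 * f 1 2 := by
    intro f
    rw [Fin.prod_univ_three, show Finset.Ioi (0 : Fin 3) = {1, 2} by decide,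
      show Finset.Ioi (1 : Fin 3) = {2} by decide, show Finset.Ioi (2 : Fin 3) = ∅ by decide]
    simp
  rw [h5] at h4
  apply Complex.ofReal_injective
  generalize P.det = d at h4 ⊢
  push_cast
  rw [h4, eq_ratCast, eq_intCast]
  push_cast
  rfl

omit hα hgen in
lemma shanks_vieta {r s t : ℝ} (hr : r ^ 3 - 17279 * r ^ 2 - 17282 * r - 1 = 0)
    (hs : s ^ 3 - 17279 * s ^ 2 - 17282 * s - 1 = 0)
    (ht : t ^ 3 - 17279 * t ^ 2 - 17282 * t - 1 = 0) (hrs : r ≠ s) (hrt : r ≠ t) (hst : s ≠ t) :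
    r + s + t = 17279 ∧ r * s + r * t + s * t = -17282 ∧ r * s * t = 1 := by
  have h1 : r ^ 2 + r * s + s ^ 2 - 17279 * (r + s) - 17282 = 0 :=
    mul_left_cancel₀ (sub_ne_zero.2 hrs) (by linear_combination hr - hs)
  have h2 : r ^ 2 + r * t + t ^ 2 - 17279 * (r + t) - 17282 = 0 :=
    mul_left_cancel₀ (sub_ne_zero.2 hrt) (by linear_combination hr - ht)
  have h3 : r + s + t - 17279 = 0 :=
    mul_left_cancel₀ (sub_ne_zero.2 hst) (by linear_combination h1 - h2)
  have h4 : r * s + r * t + s * t = -17282 := by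
    linear_combination -h1 + (r + s) * h3
  refine ⟨by linarith, h4, ?_⟩
  linear_combination hr - r ^ 2 * h3 + r * h4


omit hgen in
lemma shanks_phi_root (φ : K →ₐ[ℚ] ℝ) :
    φ α ^ 3 - 17279 * φ α ^ 2 - 17282 * φ α - 1 = 0 := by
  have := congrArg φ hα
  simpa only [map_sub, map_mul, map_pow, map_ofNat, map_one, map_zero] using this

lemma shanks_discr_alpha (φ : Fin 3 → (K →ₐ[ℚ] ℝ)) (h : 17280 < φ 0 α ∧ φ 0 α < 17281 ∧
      -1/17280 < φ 1 α ∧ φ 1 α < 0 ∧ -1 - 1/17280 < φ 2 α ∧ φ 2 α < -1) :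
    ((φ 1 α - φ 0 α) * (φ 2 α - φ 0 α) * (φ 2 α - φ 1 α)) ^ 2 = 298615687 ^ 2 := by
  obtain ⟨h1, h2, h3, h4, h5, h6⟩ := h
  obtain ⟨e1, e2, e3⟩ := shanks_vieta (shanks_phi_root hα (φ 0))
    (shanks_phi_root hα (φ 1)) (shanks_phi_root hα (φ 2))
    (by intro h; linarith) (by intro h; linarith) (by intro h; linarith)
  generalize φ 0 α = x at *
  generalize φ 1 α = y at *
  generalize φ 2 α = z at *
  have : ((y - x) * (z - x) * (z - y)) ^ 2 = (x + y + z) ^ 2 * (x * y + x * z + y * z) ^ 2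
    - 4 * (x * y + x * z + y * z) ^ 3 - 4 * (x + y + z) ^ 3 * (x * y * z)
    + 18 * (x + y + z) * (x * y + x * z + y * z) * (x * y * z) - 27 * (x * y * z) ^ 2 := by ring
  rw [this, e1, e2, e3]
  norm_num

lemma shanks_exists_basis : ∃ b : Basis (Fin 3) ℤ (𝓞 K), True := by
  refine ⟨(RingOfIntegers.basis K).reindex (Fintype.equivOfCardEq ?_), trivial⟩
  rw [← finrank_eq_card_chooseBasisIndex, RingOfIntegers.rank, shanks_finrank hα hgen,
    Fintype.card_fin]

/-- The field discriminant is `p²` and `𝓞 K = ℤ[θ]`. -/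
lemma shanks_monogenic (θ : 𝓞 K) (hθ : (θ : K) = α) :
    discr K = 298615687 ^ 2 ∧ Algebra.adjoin ℤ {θ} = ⊤ := by
  obtain ⟨φ, h, e, he⟩ := shanks_embeddings hα hgen
  obtain ⟨b, -⟩ := shanks_exists_basis hα hgen
  have h1 := shanks_discr φ e he b θ
  rw [hθ, shanks_discr_alpha hα hgen φ h] at h1
  have h2 := abs_discr_gt_two (K := K) (by rw [shanks_finrank hα hgen]; norm_num)
  set P := b.toMatrix ![1, θ, θ ^ 2] with hP
  have h3 : (298615687 : ℤ) ^ 2 = P.det ^ 2 * discr K := by exact_mod_cast h1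
  have hpr : Prime (298615687 : ℤ) := Nat.prime_iff_prime_int.1 shanks_prime
  have h4 : IsUnit P.det := by
    by_contra hu
    have hp : (298615687 : ℤ) ∣ P.det := by
      obtain ⟨i, hi, hd⟩ := (dvd_prime_pow hpr 2).1 (Dvd.intro _ h3.symm : P.det ^ 2 ∣ _)
      rcases Nat.eq_zero_or_pos i with rfl | hi0
      · rw [pow_zero] at hd
        exact absurd ((isUnit_pow_iff (two_ne_zero)).1 (associated_one_iff_isUnit.1 hd)) hu
      · exact hpr.dvd_of_dvd_pow ((dvd_pow_self _ (by omega)).trans hd.symm.dvd)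
    obtain ⟨k, hk⟩ := hp
    rw [hk, mul_pow, mul_assoc] at h3
    have h5 : 1 = k ^ 2 * discr K := mul_left_cancel₀ (a := (298615687 : ℤ) ^ 2) (by norm_num)
      (by linarith)
    have h6 : IsUnit (discr K) := IsUnit.of_mul_eq_one (k ^ 2) (by linarith)
    rw [Int.isUnit_iff_abs_eq] at h6
    omega
  constructor
  · rcases Int.isUnit_iff.1 h4 with h5 | h5 <;> rw [h5] at h3 <;> linarith
  · rw [eq_top_iff]
    rintro x -
    have hspan : x ∈ Submodule.span ℤ (Set.range (![1, θ, θ ^ 2] : Fin 3 → 𝓞 K)) := by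
      have := ((Basis.is_basis_iff_det b (v := ![1, θ, θ ^ 2])).2 (by rwa [Basis.det_apply])).2
      rw [this]; trivial
    have hsub : Submodule.span ℤ (Set.range (![1, θ, θ ^ 2] : Fin 3 → 𝓞 K)) ≤
        Subalgebra.toSubmodule (Algebra.adjoin ℤ {θ}) := by
      rw [Submodule.span_le]
      rintro _ ⟨i, rfl⟩
      have ht : θ ∈ Algebra.adjoin ℤ {θ} := Algebra.self_mem_adjoin_singleton ℤ θ
      fin_cases i
      · exact one_mem (Algebra.adjoin ℤ {θ})
      · exact ht
      · exact pow_mem ht 2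
    exact hsub hspan

omit hgen in
lemma shanks_theta_root (θ : 𝓞 K) (hθ : (θ : K) = α) :
    θ ^ 3 - 17279 * θ ^ 2 - 17282 * θ - 1 = 0 := by
  apply RingOfIntegers.coe_injective
  rw [← hθ] at hα
  simpa only [map_sub, map_mul, map_pow, map_ofNat, map_one, map_zero] using hα

/-- Ring homs out of `𝓞 K`. -/
lemma shanks_exists_hom (θ : 𝓞 K) (hθ : (θ : K) = α) {R : Type*} [CommRing R] {r : R}
    (hr : r ^ 3 - 17279 * r ^ 2 - 17282 * r - 1 = 0) : ∃ ψ : 𝓞 K →+* R, ψ θ = r := by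
  have hi : IsIntegral ℤ θ := Algebra.IsIntegral.isIntegral θ
  let pb := PowerBasis.ofAdjoinEqTop' hi (shanks_monogenic hα hgen θ hθ).2
  have hg : pb.gen = θ := PowerBasis.ofAdjoinEqTop'_gen _ _
  have h : aeval r (minpoly ℤ pb.gen) = 0 := by
    rw [hg, shanks_minpoly_int (shanks_theta_root hα θ hθ), shanks_aeval, hr]
  refine ⟨pb.lift r h, ?_⟩
  have := pb.lift_gen r h
  rw [hg] at this
  exact this

end FieldBasics


section ShanksUnits

set_option linter.unusedSectionVars false
set_option linter.unusedVariables false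

open NumberField Polynomial Module

variable {K : Type*} [Field K] [NumberField K]
  {α : K} (hα : α ^ 3 - 17279 * α ^ 2 - 17282 * α - 1 = 0)
  (hgen : Algebra.adjoin ℚ {α} = ⊤)

/-- The unit `θ`. -/
def shanksUnit (θ : 𝓞 K) (hθ : θ ^ 3 - 17279 * θ ^ 2 - 17282 * θ - 1 = 0) : (𝓞 K)ˣ where
  val := θ
  inv := θ ^ 2 - 17279 * θ - 17282
  val_inv := by linear_combination hθ
  inv_val := by linear_combination hθ

/-- The unit `θ + 1`. -/
def shanksUnit' (θ : 𝓞 K) (hθ : θ ^ 3 - 17279 * θ ^ 2 - 17282 * θ - 1 = 0) : (𝓞 K)ˣ where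
  val := θ + 1
  inv := -(θ ^ 2 - 17280 * θ - 2)
  val_inv := by linear_combination -hθ
  inv_val := by linear_combination -hθ

lemma shanks_unit_prod (φ : Fin 3 → (K →ₐ[ℚ] ℝ)) (e : Fin 3 ≃ (K →ₐ[ℚ] ℂ))
    (he : ∀ i x, e i x = ((φ i x : ℝ) : ℂ)) (u : (𝓞 K)ˣ) :
    |φ 0 (u : K)| * |φ 1 (u : K)| * |φ 2 (u : K)| = 1 := by
  have h1 := Algebra.norm_eq_prod_embeddings ℚ ℂ (u : K)
  rw [← e.prod_comp, Fin.prod_univ_three, he, he, he] at h1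
  have h2 := NumberField.Units.norm K u
  have h3 : ((Algebra.norm ℚ (u : K) : ℚ) : ℝ) = φ 0 (u : K) * φ 1 (u : K) * φ 2 (u : K) := by
    apply Complex.ofReal_injective
    rw [eq_ratCast] at h1
    push_cast
    exact h1
  rw [← abs_mul, ← abs_mul, ← h3]
  have h2' : |Algebra.norm ℚ (u : K)| = 1 := h2
  exact_mod_cast congrArg (fun q : ℚ => (q : ℝ)) h2'

lemma shanks_size_bound {x y z B : ℝ} (hB : 1 ≤ B) (hx : 0 < x) (hy : B⁻¹ ≤ y) (hy' : y ≤ B)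
    (hz : B⁻¹ ≤ z) (hz' : z ≤ B) (h : x * y * z = 1) :
    (y + x) * (z + x) * (z + y) ≤ 4 * B ^ 3 + 2 * B ^ 2 + 2 := by
  have hB0 : 0 < B := by linarith
  have hy0 : 0 < y := lt_of_lt_of_le (inv_pos.2 hB0) hy
  have hz0 : 0 < z := lt_of_lt_of_le (inv_pos.2 hB0) hz
  have hyi : y⁻¹ ≤ B := inv_le_of_inv_le₀ hB0 hy
  have hzi : z⁻¹ ≤ B := inv_le_of_inv_le₀ hB0 hz
  have hx' : x = y⁻¹ * z⁻¹ := by field_simp; linarith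
  have e1 : (y + x) * (z + x) * (z + y) = y * y * z + y * z * z + y⁻¹ * z⁻¹ * z⁻¹
      + y⁻¹ * y⁻¹ * z⁻¹ + y * z⁻¹ + z * y⁻¹ + 2 := by
    rw [hx']; field_simp; ring
  have yi0 : 0 ≤ y⁻¹ := by positivity
  have zi0 : 0 ≤ z⁻¹ := by positivity
  have a1 : ∀ {a b c : ℝ}, 0 ≤ a → 0 ≤ b → 0 ≤ c → a ≤ B → b ≤ B → c ≤ B → a * b * c ≤ B ^ 3 := by
    intro a b c ha hb hc ha' hb' hc'
    calc a * b * c ≤ B * B * B := by gcongr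
      _ = B ^ 3 := by ring
  have a2 : ∀ {a b : ℝ}, 0 ≤ a → 0 ≤ b → a ≤ B → b ≤ B → a * b ≤ B ^ 2 := by
    intro a b ha hb ha' hb'
    calc a * b ≤ B * B := by gcongr
      _ = B ^ 2 := by ring
  rw [e1]
  linarith [a1 hy0.le hy0.le hz0.le hy' hy' hz', a1 hy0.le hz0.le hz0.le hy' hz' hz',
    a1 yi0 zi0 zi0 hyi hzi hzi, a1 yi0 yi0 zi0 hyi hyi hzi, a2 hy0.le zi0 hy' hzi,
    a2 hz0.le yi0 hz' hyi]

include hα hgen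

/-- A unit of small size is `±1`. -/
lemma shanks_small_unit (φ : Fin 3 → (K →ₐ[ℚ] ℝ)) (e : Fin 3 ≃ (K →ₐ[ℚ] ℂ))
    (he : ∀ i x, e i x = ((φ i x : ℝ) : ℂ)) (u : (𝓞 K)ˣ)
    (h1 : abs (Real.log |φ 1 (u : K)|) ≤ 5.5) (h2 : abs (Real.log |φ 2 (u : K)|) ≤ 5.5) :
    u = 1 ∨ u = -1 := by
  have hne : ∀ i, 0 < |φ i (u : K)| := fun i => abs_pos.2 (by
    rw [_root_.map_ne_zero]; exact NumberField.Units.coe_ne_zero u)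
  have hexp : Real.exp 5.5 ≤ 256 := by
    have h := Real.exp_one_lt_d9.le
    have : Real.exp 5.5 ^ 2 ≤ 256 ^ 2 := by
      rw [← Real.exp_nat_mul]
      calc Real.exp ((2 : ℕ) * 5.5) = Real.exp 1 ^ 11 := by rw [← Real.exp_nat_mul]; norm_num
        _ ≤ 2.7182818286 ^ 11 := by gcongr
        _ ≤ 256 ^ 2 := by norm_num
    exact (pow_le_pow_iff_left₀ (by positivity) (by norm_num) two_ne_zero).1 this
  have hb : ∀ i, abs (Real.log |φ i (u : K)|) ≤ 5.5 →
      (256 : ℝ)⁻¹ ≤ |φ i (u : K)| ∧ |φ i (u : K)| ≤ 256 := by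
    intro i hi
    rw [abs_le] at hi
    constructor
    · have := (Real.le_log_iff_exp_le (hne i)).1 hi.1
      rw [Real.exp_neg] at this
      exact le_trans (by gcongr) this
    · exact ((Real.log_le_iff_le_exp (hne i)).1 hi.2).trans hexp
  have hprod := shanks_unit_prod φ e he u
  have hbd := shanks_size_bound (by norm_num) (hne 0) (hb 1 h1).1 (hb 1 h1).2 (hb 2 h2).1 (hb 2 h2).2
    hprod
  obtain ⟨θ, hθ⟩ : ∃ θ : 𝓞 K, (θ : K) = α := ⟨⟨α, shanks_isIntegral hα⟩, rfl⟩
  have hD := (shanks_monogenic hα hgen θ hθ).1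
  obtain ⟨b, -⟩ := shanks_exists_basis hα hgen
  have h3 := shanks_discr φ e he b u
  rw [hD] at h3
  set D := (φ 1 (u : K) - φ 0 (u : K)) * (φ 2 (u : K) - φ 0 (u : K)) *
    (φ 2 (u : K) - φ 1 (u : K)) with hDdef
  have h4 : |D| < 298615687 := by
    rw [hDdef, abs_mul, abs_mul]
    calc _ ≤ (|φ 1 (u : K)| + |φ 0 (u : K)|) * (|φ 2 (u : K)| + |φ 0 (u : K)|) *
        (|φ 2 (u : K)| + |φ 1 (u : K)|) := by gcongr <;> exact abs_sub _ _
      _ ≤ _ := hbd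
      _ < _ := by norm_num
  have h5 : D = 0 := by
    generalize (b.toMatrix ![1, (u : 𝓞 K), (u : 𝓞 K) ^ 2]).det = d at h3
    have : d = 0 := by
      by_contra hd
      have hd1 : (1 : ℝ) ≤ (d : ℝ) ^ 2 := by
        have : (1 : ℤ) ≤ d ^ 2 := by
          have := sq_pos_of_ne_zero hd
          omega
        exact_mod_cast this
      have h6 : D ^ 2 < 298615687 ^ 2 := by
        rw [← sq_abs D]; gcongr
      push_cast at h3
      nlinarith
    rw [this] at h3
    simpa using h3
  -- two conjugates agree, hence rational
  have h6 : ∃ i j : Fin 3, i ≠ j ∧ φ i (u : K) = φ j (u : K) := by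
    rw [hDdef, mul_eq_zero, mul_eq_zero, sub_eq_zero, sub_eq_zero, sub_eq_zero] at h5
    rcases h5 with (h5 | h5) | h5
    · exact ⟨1, 0, by decide, h5⟩
    · exact ⟨2, 0, by decide, h5⟩
    · exact ⟨2, 1, by decide, h5⟩
  obtain ⟨i, j, hij, h6⟩ := h6
  have hsimple := IntermediateField.isSimpleOrder_of_finrank_prime ℚ K
    (by rw [shanks_finrank hα hgen]; norm_num)
  have hcase : IntermediateField.adjoin ℚ {(u : K)} = ⊥ := by
    refine (hsimple.eq_bot_or_eq_top _).resolve_right fun htop => hij ?_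
    have h7 : Algebra.adjoin ℚ {(u : K)} = ⊤ := IntermediateField.adjoin_eq_top_iff.1 htop
    have h8 : e i = e j := shanks_ext h7 _ _ (by rw [he, he, h6])
    exact e.injective h8
  rw [IntermediateField.adjoin_simple_eq_bot_iff, IntermediateField.mem_bot] at hcase
  obtain ⟨q, hq⟩ := hcase
  have h9 : ∀ i, φ i (u : K) = q := by
    intro i; rw [← hq, AlgHom.commutes, eq_ratCast]
  rw [h9, h9, h9] at hprod
  have h10 : |(q : ℝ)| = 1 := by
    have : |(q : ℝ)| ^ 3 = 1 := by linarith [hprod, pow_succ |(q : ℝ)| 2, pow_two |(q : ℝ)|]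
    exact (pow_eq_one_iff_of_nonneg (abs_nonneg _) (by norm_num)).1 this
  rcases eq_or_eq_neg_of_abs_eq h10 with h | h
  · left
    have : q = 1 := by exact_mod_cast h
    apply Units.ext; apply RingOfIntegers.coe_injective
    rw [← hq, this]; simp
  · right
    have : q = -1 := by exact_mod_cast h
    apply Units.ext; apply RingOfIntegers.coe_injective
    rw [← hq, this]; simp

omit hα hgen in
lemma shanks_log_bounds {r1 r2 : ℝ} (h3 : -1/17280 < r1) (h4 : r1 < 0)
    (h5 : -1 - 1/17280 < r2) (h6 : r2 < -1)
    (hr1 : r1 ^ 3 - 17279 * r1 ^ 2 - 17282 * r1 - 1 = 0)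
    (hr2 : r2 ^ 3 - 17279 * r2 ^ 2 - 17282 * r2 - 1 = 0) :
    (-10 ≤ Real.log |r1| ∧ Real.log |r1| ≤ -9.7) ∧
    (-1 ≤ Real.log |r1 + 1| ∧ Real.log |r1 + 1| ≤ 0) ∧
    (0 ≤ Real.log |r2| ∧ Real.log |r2| ≤ 1) ∧
    (-10 ≤ Real.log |r2 + 1| ∧ Real.log |r2 + 1| ≤ -9.7) := by
  have hE97 : Real.exp 9.7 ≤ 17280 := by
    have h := Real.exp_one_lt_d9.le
    have : Real.exp 9.7 ^ 10 ≤ 17280 ^ 10 := by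
      rw [← Real.exp_nat_mul]
      calc Real.exp ((10 : ℕ) * 9.7) = Real.exp 1 ^ 97 := by rw [← Real.exp_nat_mul]; norm_num
        _ ≤ 2.7182818286 ^ 97 := by gcongr
        _ ≤ 17280 ^ 10 := by norm_num
    exact (pow_le_pow_iff_left₀ (by positivity) (by norm_num) (by norm_num)).1 this
  have hE10 : 20000 ≤ Real.exp 10 := by
    have h := Real.exp_one_gt_d9.le
    calc (20000 : ℝ) ≤ 2.7182818283 ^ 10 := by norm_num
      _ ≤ Real.exp 1 ^ 10 := by gcongr
      _ = Real.exp 10 := by rw [← Real.exp_nat_mul]; norm_num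
  have hE1 : 2 ≤ Real.exp 1 := by linarith [Real.exp_one_gt_d9]
  have hlow : ∀ x : ℝ, 1 / 20000 ≤ x → -10 ≤ Real.log x := by
    intro x hx
    rw [Real.le_log_iff_exp_le (by linarith), Real.exp_neg]
    refine le_trans ?_ hx
    rw [one_div]; gcongr
  have hup : ∀ x : ℝ, 0 < x → x ≤ 1 / 17280 → Real.log x ≤ -9.7 := by
    intro x h0 hx
    rw [Real.log_le_iff_le_exp h0, Real.exp_neg]
    refine hx.trans ?_
    rw [one_div]; gcongr
  have hr1' : r1 ≤ -1 / 20000 := by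
    by_contra hc; push Not at hc; nlinarith
  have hr2' : r2 ≤ -1 - 1 / 20000 := by
    by_contra hc; push Not at hc
    nlinarith [mul_pos (by linarith : (0:ℝ) < -1 - r2) (by linarith : (0:ℝ) < r2 + 1 + 1/20000)]
  refine ⟨⟨hlow _ ?_, hup _ ?_ ?_⟩, ⟨?_, ?_⟩, ⟨?_, ?_⟩, ⟨hlow _ ?_, hup _ ?_ ?_⟩⟩
  · rw [abs_of_neg h4]; linarith
  · rw [abs_of_neg h4]; linarith
  · rw [abs_of_neg h4]; linarith
  · rw [abs_of_pos (by linarith), Real.le_log_iff_exp_le (by linarith), Real.exp_neg]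
    have : (Real.exp 1)⁻¹ ≤ 2⁻¹ := by gcongr
    linarith
  · rw [abs_of_pos (by linarith)]; exact Real.log_nonpos (by linarith) (by linarith)
  · rw [abs_of_neg (by linarith)]; exact Real.log_nonneg (by linarith)
  · rw [abs_of_neg (by linarith), Real.log_le_iff_le_exp (by linarith)]; linarith
  · rw [abs_of_neg (by linarith)]; linarith
  · rw [abs_of_neg (by linarith)]; linarith
  · rw [abs_of_neg (by linarith)]; linarith

/-- Structure of the unit group. -/
lemma shanks_units (θ : 𝓞 K) (hθ : (θ : K) = α)
    (hθ3 : θ ^ 3 - 17279 * θ ^ 2 - 17282 * θ - 1 = 0) (u : (𝓞 K)ˣ) :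
    ∃ i j : ℤ, u = shanksUnit θ hθ3 ^ i * shanksUnit' θ hθ3 ^ j ∨
      u = -(shanksUnit θ hθ3 ^ i * shanksUnit' θ hθ3 ^ j) := by
  obtain ⟨φ, ⟨b1, b2, b3, b4, b5, b6⟩, e, he⟩ := shanks_embeddings hα hgen
  obtain ⟨⟨c1, c2⟩, ⟨c3, c4⟩, ⟨c5, c6⟩, c7, c8⟩ := shanks_log_bounds b3 b4 b5 b6
    (shanks_phi_root hα (φ 1)) (shanks_phi_root hα (φ 2))
  set l1 := Real.log |φ 1 α|
  set m1 := Real.log |φ 1 α + 1|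
  set l2 := Real.log |φ 2 α|
  set m2 := Real.log |φ 2 α + 1|
  set x1 := Real.log |φ 1 (u : K)|
  set x2 := Real.log |φ 2 (u : K)|
  have hdet : 0 < l1 * m2 - l2 * m1 := by nlinarith
  have hdet' := hdet.ne'
  set s := (x1 * m2 - x2 * m1) / (l1 * m2 - l2 * m1) with hs
  set t := (l1 * x2 - l2 * x1) / (l1 * m2 - l2 * m1) with ht
  have e1 : x1 = s * l1 + t * m1 := by rw [hs, ht, div_mul_eq_mul_div, div_mul_eq_mul_div, ← add_div, eq_div_iff hdet']; ring
  have e2 : x2 = s * l2 + t * m2 := by rw [hs, ht, div_mul_eq_mul_div, div_mul_eq_mul_div, ← add_div, eq_div_iff hdet']; ring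
  have hs' := abs_le.1 (abs_sub_round s)
  have ht' := abs_le.1 (abs_sub_round t)
  have hlog : ∀ i, Real.log |φ i ((u * (shanksUnit θ hθ3 ^ (round s) *
      shanksUnit' θ hθ3 ^ (round t))⁻¹ : (𝓞 K)ˣ) : K)| = Real.log |φ i (u : K)| -
        (round s * Real.log |φ i α| + round t * Real.log |φ i α + 1|) := by
    intro i
    have hu : ∀ v : (𝓞 K)ˣ, |φ i (v : K)| ≠ 0 := fun v => abs_ne_zero.2 (by
      rw [_root_.map_ne_zero]; exact NumberField.Units.coe_ne_zero v)
    have hv1 : φ i (shanksUnit θ hθ3 : K) = φ i α := by rw [← hθ]; rfl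
    have hv2 : φ i (shanksUnit' θ hθ3 : K) = φ i α + 1 := by
      rw [← hθ, ← map_one (φ i), ← map_add]; rfl
    have n1 := hu (shanksUnit θ hθ3)
    have n2 := hu (shanksUnit' θ hθ3)
    rw [hv1] at n1
    rw [hv2] at n2
    rw [NumberField.Units.coe_mul, map_mul, abs_mul, Real.log_mul (hu _) (hu _), mul_inv,
      ← zpow_neg, ← zpow_neg, NumberField.Units.coe_mul, NumberField.Units.coe_zpow,
      NumberField.Units.coe_zpow, map_mul, map_zpow₀, map_zpow₀, hv1, hv2, abs_mul, abs_zpow,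
      abs_zpow, Real.log_mul (zpow_ne_zero _ n1) (zpow_ne_zero _ n2), Real.log_zpow, Real.log_zpow]
    push_cast
    ring
  have hsm := shanks_small_unit hα hgen φ e he (u * (shanksUnit θ hθ3 ^ (round s) *
      shanksUnit' θ hθ3 ^ (round t))⁻¹) ?_ ?_
  · refine ⟨round s, round t, ?_⟩
    rcases hsm with h | h
    · left; rwa [mul_inv_eq_one] at h
    · right; rw [mul_inv_eq_iff_eq_mul, neg_one_mul] at h; exact h
  · rw [hlog 1]
    change |x1 - (_ * l1 + _ * m1)| ≤ _
    rw [e1, abs_le]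
    constructor <;> nlinarith
  · rw [hlog 2]
    change |x2 - (_ * l2 + _ * m2)| ≤ _
    rw [e2, abs_le]
    constructor <;> nlinarith

end ShanksUnits


section ShanksLower

open NumberField Polynomial Module

set_option linter.unusedSectionVars false

/-- Multiplication in `ℤ[θ]` on coordinate triples. -/
def tmul (x y : ℤ × ℤ × ℤ) : ℤ × ℤ × ℤ :=
  let a := x.1; let b := x.2.1; let c := x.2.2
  let d := y.1; let e := y.2.1; let f := y.2.2
  let m3 := b * f + c * e
  let m4 := c * f
  (a * d + m3 + 17279 * m4, a * e + b * d + 17282 * m3 + (1 + 17279 * 17282) * m4,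
    a * f + b * e + c * d + 17279 * m3 + (17282 + 17279 * 17279) * m4)

/-- Evaluation of a coordinate triple. -/
def tev {A : Type*} [CommRing A] (t : A) (x : ℤ × ℤ × ℤ) : A := x.1 + x.2.1 * t + x.2.2 * t ^ 2

lemma tev_tmul {A : Type*} [CommRing A] {t : A}
    (ht : t ^ 3 - 17279 * t ^ 2 - 17282 * t - 1 = 0) (x y : ℤ × ℤ × ℤ) :
    tev t (tmul x y) = tev t x * tev t y := by
  obtain ⟨a, b, c⟩ := x
  obtain ⟨d, e, f⟩ := y
  simp only [tev, tmul]
  push_cast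
  linear_combination (-(c * f * t : A) - (b * f + c * e) - 17279 * (c * f)) * ht

lemma map_tev {A B : Type*} [CommRing A] [CommRing B] (ψ : A →+* B) (t : A) (x : ℤ × ℤ × ℤ) :
    ψ (tev t x) = tev (ψ t) x := by simp [tev]

/-- Value of a triple at a root mod `q`, as a natural number. -/
def tval (q r : ℕ) (x : ℤ × ℤ × ℤ) : ℕ :=
  ((x.1 + x.2.1 * r + x.2.2 * r ^ 2) % (q : ℤ)).toNat

lemma tev_zmod (q r : ℕ) (hq : 0 < q) (x : ℤ × ℤ × ℤ) :
    tev ((r : ℕ) : ZMod q) x = ((tval q r x : ℕ) : ZMod q) := by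
  have h0 : 0 ≤ (x.1 + x.2.1 * r + x.2.2 * r ^ 2) % (q : ℤ) := Int.emod_nonneg _ (by omega)
  have h1 : ((tval q r x : ℕ) : ZMod q) = (((tval q r x : ℕ) : ℤ) : ZMod q) := by push_cast; rfl
  rw [h1, tval, Int.toNat_of_nonneg h0, ZMod.intCast_mod]
  simp [tev]

/-- A certificate `(γ, δ, u, v, n)` for an ideal `ℓ`-th power. -/
abbrev Cert := (ℤ × ℤ × ℤ) × (ℤ × ℤ × ℤ) × (ℤ × ℤ × ℤ) × ℤ × ℤ

/-- Checks `γ δ = n ^ ℓ` and `u γ + v δ = 1`. -/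
def certOK (l : ℕ) (c : Cert) : Bool :=
  let g := c.1; let d := c.2.1; let u := c.2.2.1; let v := c.2.2.2.1; let n := c.2.2.2.2
  let w := tmul u g
  (tmul g d == (n ^ l, 0, 0)) && ((w.1 + v * d.1, w.2.1 + v * d.2.1, w.2.2 + v * d.2.2) == (1, 0, 0))

lemma exists_ideal_of_certOK {A : Type*} [CommRing A] [IsDedekindDomain A] {t : A}
    (ht : t ^ 3 - 17279 * t ^ 2 - 17282 * t - 1 = 0) {l : ℕ} {c : Cert} (h : certOK l c = true) :
    ∃ I : Ideal A, I ^ l = Ideal.span {tev t c.1} := by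
  obtain ⟨g, d, u, v, n⟩ := c
  simp only [certOK, Bool.and_eq_true, beq_iff_eq, Prod.mk.injEq] at h
  obtain ⟨h1, h2, h3, h4⟩ := h
  refine exists_ideal_pow_eq l (d := tev t d) (n := (n : A)) ?_ ⟨tev t u, (v : A), ?_⟩
  · rw [← tev_tmul ht, h1]; simp [tev]
  · show tev t u * tev t g + _ = _
    rw [← tev_tmul ht]
    have h2' := congrArg (Int.cast : ℤ → A) h2
    have h3' := congrArg (Int.cast : ℤ → A) h3
    have h4' := congrArg (Int.cast : ℤ → A) h4
    push_cast at h2' h3' h4'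
    simp only [tev]
    linear_combination h2' + t * h3' + t ^ 2 * h4'

/-- Checks on a residue test `(q, r)`. -/
def testOK (l : ℕ) (q r : ℕ) : Bool :=
  let e := (q - 1) / l
  decide (1 < q) && decide (q < 2 ^ 20) && (l * e == q - 1) && (tval q r (-1, -17282, -17279) + r ^ 3) % q == 0
    && powm q 20 r e == 1 && powm q 20 (r + 1) e == 1 && powm q 20 (q - 1) e == 1

lemma natCast_pow_one_iff {q : ℕ} (a e : ℕ) (he : e < 2 ^ 20) (hq1 : 1 < q) :
    ((a : ℕ) : ZMod q) ^ e = 1 ↔ powm q 20 a e = 1 := by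
  rw [← Nat.cast_pow, ← Nat.cast_one, ZMod.natCast_eq_natCast_iff', powm_eq _ _ _ _ he, Nat.mod_eq_of_lt hq1]

variable {K : Type*} [Field K] [NumberField K]
variable {α : K} (hα : α ^ 3 - 17279 * α ^ 2 - 17282 * α - 1 = 0)
  (hgen : Algebra.adjoin ℚ {α} = ⊤) (θ : 𝓞 K) (hθ : (θ : K) = α)

include hα hgen hθ

lemma shanks_test {l q r : ℕ} (h : testOK l q r = true) :
    ∃ ψ : 𝓞 K →+* ZMod q, ψ θ = (r : ZMod q) ∧ ∀ u : (𝓞 K)ˣ, ψ u ^ ((q - 1) / l) = 1 := by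
  simp only [testOK, Bool.and_eq_true, beq_iff_eq, decide_eq_true_eq] at h
  obtain ⟨⟨⟨⟨⟨⟨h1, h2⟩, h3⟩, h4⟩, h5⟩, h6⟩, h7⟩ := h
  have hr : ((r : ℕ) : ZMod q) ^ 3 - 17279 * (r : ZMod q) ^ 2 - 17282 * (r : ZMod q) - 1 = 0 := by
    have h8 := (ZMod.natCast_eq_zero_iff _ _).2 (Nat.dvd_of_mod_eq_zero h4)
    rw [Nat.cast_add, ← tev_zmod q r (by omega)] at h8
    simp only [tev] at h8
    push_cast at h8
    linear_combination h8
  obtain ⟨ψ, hψ⟩ := shanks_exists_hom hα hgen θ hθ hr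
  refine ⟨ψ, hψ, ?_⟩
  have hθ3 := shanks_theta_root hα θ hθ
  have he : (q - 1) / l < 2 ^ 20 := lt_of_le_of_lt (Nat.div_le_self _ _) (by omega)
  have n1 : (ψ θ) ^ ((q - 1) / l) = 1 := by
    rw [hψ, natCast_pow_one_iff _ _ he h1]; exact h5
  have n2 : (ψ (θ + 1)) ^ ((q - 1) / l) = 1 := by
    have : ψ (θ + 1) = ((r + 1 : ℕ) : ZMod q) := by rw [map_add, hψ, map_one]; push_cast; rfl
    rw [this, natCast_pow_one_iff _ _ he h1]; exact h6
  have n3 : (-1 : ZMod q) ^ ((q - 1) / l) = 1 := by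
    have : (-1 : ZMod q) = ((q - 1 : ℕ) : ZMod q) := by
      rw [Nat.cast_sub (by omega)]; simp
    rw [this, natCast_pow_one_iff _ _ he h1]; exact h7
  let T : (𝓞 K)ˣ →* (ZMod q)ˣ := (powMonoidHom ((q - 1) / l)).comp (Units.map (ψ : 𝓞 K →* ZMod q))
  have hT : ∀ u : (𝓞 K)ˣ, ((T u : (ZMod q)ˣ) : ZMod q) = ψ u ^ ((q - 1) / l) := fun u => rfl
  intro u
  rw [← hT]
  have m1 : T (shanksUnit θ hθ3) = 1 := by ext; rw [hT]; exact n1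
  have m2 : T (shanksUnit' θ hθ3) = 1 := by ext; rw [hT]; exact n2
  have m3 : T (-1) = 1 := by ext; rw [hT]; simpa using n3
  obtain ⟨i, j, h | h⟩ := shanks_units hα hgen θ hθ hθ3 u
  · rw [h, map_mul, map_zpow, map_zpow, m1, m2]; simp
  · rw [h, neg_eq_neg_one_mul, map_mul, map_mul, map_zpow, map_zpow, m1, m2, m3]; simp

lemma shanks_indep {l m k : ℕ} (hl : l.Prime) (c : Fin k → Cert) (q r : Fin k → ℕ)
    (hc : ∀ i, certOK (m * l) (c i) = true) (hq : ∀ i, (q i).Prime)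
    (ht : ∀ i, testOK l (q i) (r i) = true)
    (hs : ∀ i j, (tval (q i) (r i) (c j).1 != 0 &&
      (powm (q i) 20 (tval (q i) (r i) (c j).1) ((q i - 1) / l) == 1) == decide (i ≠ j)) = true) :
    ∃ C : Fin k → ClassGroup (𝓞 K), (∀ i, C i ^ (m * l) = 1) ∧
      ∀ x : Fin k → ℕ, ∏ i, (C i ^ m) ^ x i = 1 → ∀ i, l ∣ x i := by
  have hθ3 := shanks_theta_root hα θ hθ
  choose I hI using fun i => exists_ideal_of_certOK hθ3 (hc i)
  choose ψ hψ hu using fun i => shanks_test hα hgen θ hθ (ht i)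
  have hfact : ∀ i, Fact (q i).Prime := fun i => ⟨hq i⟩
  have hne : ∀ i j, ψ i (tev θ (c j).1) ≠ 0 := by
    intro i j h0
    have h1 := hs i j
    simp only [Bool.and_eq_true, bne_iff_ne] at h1
    rw [map_tev, hψ, tev_zmod _ _ (hq i).pos, ZMod.natCast_eq_zero_iff] at h0
    refine h1.1 (Nat.eq_zero_of_dvd_of_lt h0 ?_)
    have := Int.emod_lt_of_pos ((c j).1.1 + (c j).1.2.1 * (r i) + (c j).1.2.2 * (r i) ^ 2)
      (show (0 : ℤ) < q i by exact_mod_cast (hq i).pos)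
    rw [tval]; have := (hq i).pos; omega
  have hml : ∀ i : Fin k, m * l ≠ 0 := by
    intro i h0
    have := hI i
    rw [h0, pow_zero, Ideal.one_eq_top, eq_comm, Ideal.span_singleton_eq_top] at this
    have h1 := hs i i
    simp only [Bool.and_eq_true, beq_iff_eq, ne_eq, not_true_eq_false, decide_false, beq_eq_false_iff_ne] at h1
    have h2 := hu i this.unit
    rw [IsUnit.unit_spec, map_tev, hψ, tev_zmod _ _ (hq i).pos, natCast_pow_one_iff _ _ ?_ (hq i).one_lt] at h2
    · exact h1.2 h2
    · have h3 := ht i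
      simp only [testOK, Bool.and_eq_true, beq_iff_eq, decide_eq_true_eq] at h3
      exact lt_of_le_of_lt (Nat.div_le_self _ _) (by omega)
  have hI0 : ∀ i, I i ∈ nonZeroDivisors (Ideal (𝓞 K)) := by
    intro i
    rw [mem_nonZeroDivisors_iff_ne_zero]
    intro h0
    have h1 := hI i
    rw [h0, zero_pow (hml i), eq_comm, Ideal.zero_eq_bot, Ideal.span_singleton_eq_bot] at h1
    exact hne i i (by rw [h1, map_zero])
  refine ⟨fun i => ClassGroup.mk0 ⟨I i, hI0 i⟩, ?_, ?_⟩
  · intro i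
    rw [← map_pow, ClassGroup.mk0_eq_one_iff, SubmonoidClass.coe_pow]
    show (I i ^ (m * l)).IsPrincipal
    rw [hI i]
    exact ⟨⟨_, rfl⟩⟩
  · intro x hx
    have hlt : ∀ i, (q i - 1) / l < 2 ^ 20 := by
      intro i
      have h3 := ht i
      simp only [testOK, Bool.and_eq_true, beq_iff_eq, decide_eq_true_eq] at h3
      exact lt_of_le_of_lt (Nat.div_le_self _ _) (by omega)
    have hval : ∀ i j, ψ i (tev θ (c j).1) ^ ((q i - 1) / l) = 1 ↔ i ≠ j := by
      intro i j
      rw [map_tev, hψ, tev_zmod _ _ (hq i).pos, natCast_pow_one_iff _ _ (hlt i) (hq i).one_lt]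
      have h1 := hs i j
      simp only [Bool.and_eq_true, beq_iff_eq] at h1
      have h2 := h1.2
      constructor
      · intro h; rw [h] at h2; simpa using h2.symm
      · intro h; simpa [h] using h2
    refine dvd_of_prod_mk0_eq_one hl (fun i => (⟨I i, hI0 i⟩ : nonZeroDivisors (Ideal (𝓞 K))) ^ m)
      (fun i => tev θ (c i).1) ?_ (fun i => ZMod (q i)) ψ (fun i => (q i - 1) / l) ?_ hu ?_ hne ?_ x ?_
    · intro i
      rw [SubmonoidClass.coe_pow, ← pow_mul]; exact hI i
    · intro i y hy
      have h3 := ht i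
      simp only [testOK, Bool.and_eq_true, beq_iff_eq, decide_eq_true_eq] at h3
      obtain ⟨⟨⟨⟨⟨⟨-, -⟩, h3⟩, -⟩, -⟩, -⟩, -⟩ := h3
      show y ^ (l * ((q i - 1) / l)) = 1
      rw [h3]; exact ZMod.pow_card_sub_one_eq_one hy
    · intro i j hij; exact (hval i j).2 hij.symm
    · intro i h; exact (hval i i).1 h rfl
    · rw [← hx]
      refine Finset.prod_congr rfl fun i _ => ?_
      rw [map_pow]

/-- Certificates for `ℓ = 2`. -/
def certs2 : Fin 6 → Cert :=
  ![((-25, 1, 0), (-448632, -17254, 1), (-25264204197, -1905904367, 110380), 1407847, 3349),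
    ((-1, -26, 0), (-11233377, -11680630, 676), (-4243930563294, -4236671499346, 245191960), 377229, 3349),
    ((34, 33, 0), (568096, -18817953, 1089), (-50040737119, 62179849371222, -3598370721), 3203915, 4399),
    ((-33, 1, 0), (-586400, -17246, 1), (-159450850930, -9240946696, 535311), 8973190, 4399),
    ((-1, 85, 0), (-126331164, -124840690, 7225), (-4314706625449749, -4313618285304495, 249645136000), 34321907, 11267),
    ((-85, -86, 0), (-1500957, -127802794, 7396), (273396286062, -3335467847139646, 193024757464), -26542275, 11267)]

/-- Certificates for `ℓ = 5`. -/
def certs5 : Fin 2 → Cert :=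
  ![((-14330, 11379055, -427), (-787728619363795530, -786601438453425549, 45523554360022), (-27345793963553553736865222975507930, -27342581723940550571562551631773099, 1582416901157979744896570277089), 520320864840343476191, 25967),
    ((-4000495, -4015679, -427), (-2997094130933319, -790543110987899806, 45749032357205), (12584274373647548017907443609555, 287146095872541613440089203874996893, -16617250849395889213993970828028), 5465001021431405440021, 25967)]

/-- Certificate for `ℓ = 13`. -/
def certs13 : Fin 1 → Cert :=
  ![((-26886708146654998216370923860882506222282641757938966800838729599906737042761126884040134485452948379396518350420796490896163794684883406662079546628782129856689890439915618381617555081766521841921177738437880728170625782417497749558034961872111944518916302618974, -192656636839985982747803897806364537621032451544684728328699005812429115878188427268291674614638254142666207982794190169766957404311334231778288017483152155176893744106608011009125135642747958196396032647326368391119673617486581746960758136477853584824730163307413275, 7097200910749800870925497506207989193873589477741452489981624105652944975277354834597891700059342772991107492656447283515807345885973139014787465570006006239130198223190860532364669174662149977753212709784246907950487555712406750317359667503625439844500484201823), (-233097118935548141439424872247459381640173528789059626301593357097064277027036162431407605453482577959604101058018678766065069767180381901191626024358045375549463856368127413160516175194368615734415355705844271252539650795079649060974986424618898493720066484305963969525243394205873580609448758540986969095276905207745858713592928533624743296230496901916876773006418189032256216387462521209501284734443682658425638956874940450250121505803394726929889200364307421379867807204203887944810564038279595688544165760867884785333313722362133954,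 -233089180282379927151282962497565838479107047697973183182714612418276871304266784603269060053660593197170071434448976591133073258480693038416668033315295076558076413331920302543068212133223905649158827406512135582124856036144659437691327932342029916384669964729796558425748575681111314441684970579650379089149601335528121171458072280120742002478094387594853094862064151996515132223075613778604185205910730940699048008476981668239382859132683868993859820318048800438624567076416441236611217717486418752410814378268706769201314340179730509, 13489737739435887236298893685476819720192453999883018691828465172318171031146083447053571529663845047082459776053327233508270458032698595557565179519770272957556959765337911147541825461550538169621421582014727783754339202399657932711565040797750036224440037610015217772087557282112639691431850432013956374523531538803640228029312396584686053218239335295476321602293492352184518974656616074827613673803561217411279316569813389134213142872174098520392164039724684434337300457375478911028458051264221425388159703062587631706065747027774), (7819764421420348785224923791336576509364387457131639199959882506274023217589068999737063827111050245058153152149403299487616470696122377921510617750448531273906523605117325458744667066199818205405340649783452921852441114637577119657431565461166256383815610499235393018766072368765917221556977016726668668698735062416883375200578668688762563871713797550937267536652830194656036668292164997761962827338632520929080992590879951982208354798570339007652094671099882483707535101247369064231784449738642269905929232275080074982419716099676457483483212034337488330147367732603697185952008742900977768514480652746693783270300607385781946296816784631815783911308985456458162106083074730925782892219547004432499298718059784675542584552988229540324338316645153558493238356271698990494716048599234470585055830697099404649125646898388524127429691734895917138409795438224681700086461701139565307357058956185249156240664797384212707025033585874865253460386179228179760922576833939648421897304498671591880718282820765080232291499006914312154652290628338925925942765219960028085634477066090,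 7818859330106854992761114300633568309414267140338838132124781823366325476414951021164434489067570955850326966435061636167652157709847492643614918012733238884124763636875482331286765055549708818932628503947265071549416954117593885464877930466569750580573151285703958247517426975674175981373462543758753646021780321160843079430180593730866388103356799482932650676412900011931170161648787480639422816001386037698654594633433830343575746707677596824660080917097718341544816714279682770506552918811221185563026611574152321982717343474552882027448459415100346111337637087279052105486817128738227840755317151069071646765130139295567282375404033004235905266691010744175279661281929775006535530669097419201972263508244365540016160781917958491750902879100422474637611147859385321838979877950104592144085214415222748552943963553716674145883142105456028289214726701849589718297995637265834189492923739044488898213166989028450646388111833158703108152626748495533285734113617628157351171296917119016659937801569023398636808033316309304748782558456207860167715215235665015465886151001191, -452506470508980456418395874288762471278745739134496226884650232835430607772130790307453812096048379415520766359939410552136358910553823873413119845992439907012200050161166341610074169881861804197001289957648895270190374819186700378673922110266950234081389562376446057512228728077519405165945993174587120111914289519903867230992473127813426804498011995399276166112966800399346790468041696972102325905523422947190489057451399457612220537653906299611086198476559041460972775566999634144506354840536100503300116433892952042124506879573896519005247606193992858556782307967599187248757619434453683218045953582520454687395944502685228850645448854025653660018574280940525936875600425413206900079906932182325268992131364167716271824919216832335644118711230824233853499715816371441809428943655559104995236615356205588346969882126737854491124495669907995680473820414045757802543732486958162568984329464851260076753609543634670095119622064546505716790826870580481800308098537989794627959058078371232875213204915881997601497264471308979565916463209739707887013035287430816984969737),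 -527974560105745723227228827985279815883283637871440210292328064255329098575245195797677169702583562989816248556299622644646755018732146009617926702999321297092654087180795224491298844314297235264198289081738891241724239189835785160527907972492787435996091621835456033971228758308309542760269700414570055120607427512955025449085074922978838781700313880709554142858068886047562771693509225669191710382390764850674299446506908908342705388699554644841062425394162703665234938353866404932939825073428419791667644625047027842846087679158581129432459566989515804852618800407495092140897622240978885717448258869322423098014748482377671306159652904587607009481985792098956393346548426458410222487610095780003011916103808777808433091200822954514202755560653157362354254763968700500844885674682437880664326293, 53117)]

lemma shanks_two_torsion : 2 ^ 6 ∣ Nat.card (powMonoidHom 2 : ClassGroup (𝓞 K) →* _).ker := by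
  obtain ⟨C, h1, h2⟩ := shanks_indep hα hgen θ hθ (l := 2) (m := 1) Nat.prime_two certs2
    ![3797, 3797, 5333, 5333, 8821, 8821] ![559, 359, 5150, 203, 1790, 546]
    (by decide +kernel) (by intro i; fin_cases i <;> norm_num) (by decide +kernel)
    (by decide +kernel)
  exact pow_dvd_card_torsion Nat.prime_two C (by simpa using h1) (by simpa using h2)

lemma shanks_five : 25 ∣ Nat.card (ClassGroup (𝓞 K)) := by
  obtain ⟨C, h1, h2⟩ := shanks_indep hα hgen θ hθ (l := 5) (m := 1) Nat.prime_five certs5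
    ![4591, 4591] ![209, 3931]
    (by decide +kernel) (by intro i; fin_cases i <;> norm_num) (by decide +kernel)
    (by decide +kernel)
  have h := pow_dvd_card_torsion Nat.prime_five C (by simpa using h1) (by simpa using h2)
  exact h.trans (Subgroup.card_subgroup_dvd_card _)

lemma shanks_thirteen : 169 ∣ Nat.card (ClassGroup (𝓞 K)) := by
  have h13 : Nat.Prime 13 := by norm_num
  obtain ⟨C, h1, h2⟩ := shanks_indep hα hgen θ hθ (l := 13) (m := 13) h13 certs13
    ![19267] ![7345]
    (by decide +kernel) (by intro i; fin_cases i; norm_num) (by decide +kernel)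
    (by decide +kernel)
  have : Fact (Nat.Prime 13) := ⟨h13⟩
  have ho : orderOf (C 0) = 13 ^ (1 + 1) := by
    refine orderOf_eq_prime_pow ?_ (h1 0)
    intro h
    have := h2 (fun _ => 1) (by simpa using h) 0
    omega
  have := orderOf_dvd_natCard (C 0)
  rw [ho] at this; exact this

end ShanksLower


section ShanksRegulator

open NumberField NumberField.InfinitePlace NumberField.Units Module

set_option linter.unusedSectionVars false

variable {K : Type*} [Field K] [NumberField K]
variable {α : K} (hα : α ^ 3 - 17279 * α ^ 2 - 17282 * α - 1 = 0)
  (hgen : Algebra.adjoin ℚ {α} = ⊤)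

include hα hgen

lemma shanks_totallyReal : IsTotallyReal K := by
  obtain ⟨φ, -, e, he⟩ := shanks_embeddings hα hgen
  refine ⟨fun v => ?_⟩
  rw [← mk_embedding v, isReal_mk_iff]
  obtain ⟨i, hi⟩ := e.surjective v.embedding.toRatAlgHom
  rw [ComplexEmbedding.isReal_iff]
  ext x
  have h1 : v.embedding x = ((φ i x : ℝ) : ℂ) := by
    rw [← he, hi]; rfl
  rw [ComplexEmbedding.conjugate_coe_eq, h1, Complex.conj_ofReal]

lemma shanks_regulator (θ : 𝓞 K) (hθ : (θ : K) = α) : 94 ≤ regulator K := by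
  classical
  have := shanks_totallyReal hα hgen
  obtain ⟨φ, ⟨b1, b2, b3, b4, b5, b6⟩, e, he⟩ := shanks_embeddings hα hgen
  have hθ3 := shanks_theta_root hα θ hθ
  obtain ⟨⟨c1, c2⟩, ⟨c3, c4⟩, ⟨c5, c6⟩, c7, c8⟩ := shanks_log_bounds b3 b4 b5 b6
    (shanks_phi_root hα (φ 1)) (shanks_phi_root hα (φ 2))
  let W : Fin 3 → InfinitePlace K := fun i => InfinitePlace.mk (e i : K →+* ℂ)
  have hW : ∀ i x, W i x = |φ i x| := by
    intro i x
    show ‖(e i) x‖ = _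
    rw [he, Complex.norm_real, Real.norm_eq_abs]
  have hWb : Function.Bijective W := by
    constructor
    · intro i j hij
      have h1 := hW i α
      have h2 := hW j α
      rw [hij, h2] at h1
      have a0 : |φ 0 α| = φ 0 α := abs_of_pos (by linarith)
      have a1 : |φ 1 α| = -φ 1 α := abs_of_neg b4
      have a2 : |φ 2 α| = -φ 2 α := abs_of_neg (by linarith)
      fin_cases i <;> fin_cases j <;> first | rfl | (exfalso; simp only [Fin.zero_eta, Fin.mk_one, Fin.reduceFinMk, a0, a1, a2] at h1; linarith)
    · intro v
      obtain ⟨i, hi⟩ := e.surjective v.embedding.toRatAlgHom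
      refine ⟨i, ?_⟩
      rw [← mk_embedding v]
      show InfinitePlace.mk _ = _
      rw [hi]; rfl
  let E3 : Fin 3 ≃ InfinitePlace K := Equiv.ofBijective W hWb
  have hrank : rank K = 2 := by
    rw [rank, ← Fintype.card_congr E3, Fintype.card_fin]
  let E2 : Fin 2 ≃ {w : InfinitePlace K // w ≠ W 0} :=
    (finSuccAboveEquiv (0 : Fin 3)).trans
      (E3.subtypeEquiv (fun a => by
        show a ≠ 0 ↔ W a ≠ W 0
        rw [hWb.1.ne_iff]))
  let v : Fin 2 → (𝓞 K)ˣ := ![shanksUnit θ hθ3, shanksUnit' θ hθ3]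
  let u : Fin (rank K) → (𝓞 K)ˣ := v ∘ finCongr hrank
  have hdet := regOfFamily_eq_det u (W 0) (E2.symm.trans (finCongr hrank).symm)
  have hE20 : (E2 0 : InfinitePlace K) = W 1 := rfl
  have hE21 : (E2 1 : InfinitePlace K) = W 2 := rfl
  rw [← Matrix.det_submatrix_equiv_self E2, Matrix.det_fin_two] at hdet
  simp only [Matrix.submatrix_apply, Matrix.of_apply, IsTotallyReal.mult_eq, Nat.cast_one, one_mul,
    Equiv.trans_apply, Equiv.symm_apply_apply, u, Function.comp_apply, Equiv.apply_symm_apply,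
    hE20, hE21, hW, v, Matrix.cons_val_zero, Matrix.cons_val_one] at hdet
  have hu1 : algebraMap (𝓞 K) K ((shanksUnit θ hθ3 : (𝓞 K)ˣ) : 𝓞 K) = α := hθ
  have hu2 : algebraMap (𝓞 K) K ((shanksUnit' θ hθ3 : (𝓞 K)ˣ) : 𝓞 K) = α + 1 := by
    show algebraMap (𝓞 K) K (θ + 1) = _
    rw [map_add, map_one, ← hθ]
  rw [hu1, hu2, map_add, map_add, map_one, map_one] at hdet
  have htop : Subgroup.closure (Set.range u) ⊔ torsion K = ⊤ := by
    rw [eq_top_iff]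
    intro x _
    have hs1 : shanksUnit θ hθ3 ∈ Subgroup.closure (Set.range u) :=
      Subgroup.subset_closure ⟨(finCongr hrank).symm 0, by simp [u, v]⟩
    have hs2 : shanksUnit' θ hθ3 ∈ Subgroup.closure (Set.range u) :=
      Subgroup.subset_closure ⟨(finCongr hrank).symm 1, by simp [u, v]⟩
    have hm1 : (-1 : (𝓞 K)ˣ) ∈ torsion K := by
      rw [torsion, CommGroup.mem_torsion, isOfFinOrder_iff_pow_eq_one]
      exact ⟨2, by norm_num, by simp⟩
    obtain ⟨i, j, h | h⟩ := shanks_units hα hgen θ hθ hθ3 x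
    · rw [h]
      exact Subgroup.mem_sup_left (mul_mem (zpow_mem hs1 i) (zpow_mem hs2 j))
    · rw [h, neg_eq_neg_one_mul]
      exact mul_mem (Subgroup.mem_sup_right hm1)
        (Subgroup.mem_sup_left (mul_mem (zpow_mem hs1 i) (zpow_mem hs2 j)))
  have hreg := regOfFamily_div_regulator u
  rw [htop, Subgroup.index_top, Nat.cast_one, div_eq_one_iff_eq (regulator_ne_zero K), hdet] at hreg
  rw [← hreg]
  refine le_trans ?_ (le_abs_self _)
  nlinarith [mul_nonneg (sub_nonneg.2 c2) (sub_nonneg.2 c8), mul_nonneg c5 (neg_nonneg.2 c4)]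

lemma shanks_residue (θ : 𝓞 K) (hθ : (θ : K) = α) :
    dedekindZeta_residue K = 4 * regulator K * classNumber K / 298615687 := by
  have := shanks_totallyReal hα hgen
  have h3 := shanks_finrank hα hgen
  rw [dedekindZeta_residue_def, IsTotallyReal.nrComplexPlaces_eq_zero, ← IsTotallyReal.finrank, h3,
    (shanks_monogenic hα hgen θ hθ).1,
    NumberField.Units.torsionOrder_eq_two_of_odd_finrank (by rw [h3]; decide)]
  have : Real.sqrt |(((298615687 ^ 2 : ℤ)) : ℝ)| = 298615687 := by
    rw [Int.cast_pow, abs_pow, Real.sqrt_sq (abs_nonneg _)]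
    norm_num
  rw [this]
  push_cast
  ring

end ShanksRegulator


section ShanksChar

open MulChar AddChar

variable {p : ℕ} [Fact p.Prime]

lemma exists_of_mem_adjoin_cube {w : ℂ} (hw : w ^ 2 + w + 1 = 0) {z : ℂ}
    (hz : z ∈ Algebra.adjoin ℤ {w}) : ∃ a b : ℤ, z = a + b * w := by
  induction hz using Algebra.adjoin_induction with
  | mem x hx => rw [Set.mem_singleton_iff] at hx; exact ⟨0, 1, by simp [hx]⟩
  | algebraMap r => exact ⟨r, 0, by simp⟩
  | add x y _ _ hx hy =>
    obtain ⟨a, b, rfl⟩ := hx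
    obtain ⟨c, d, rfl⟩ := hy
    exact ⟨a + c, b + d, by push_cast; ring⟩
  | mul x y _ _ hx hy =>
    obtain ⟨a, b, rfl⟩ := hx
    obtain ⟨c, d, rfl⟩ := hy
    exact ⟨a * c - b * d, a * d + b * c - b * d, by push_cast; linear_combination b * d * hw⟩

/-- Uniqueness of the representation `4p = t² + 27 m²` when `m = 1` is possible. -/
lemma shanks_repr {t m : ℤ} (h : t ^ 2 + 27 * m ^ 2 = 4 * 298615687) (h3 : t % 3 = 1) :
    t = 34561 := by
  have hp : Prime (298615687 : ℤ) := by
    have := Nat.prime_iff_prime_int.mp shanks_prime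
    exact_mod_cast this
  have hd : (298615687 : ℤ) ∣ (34561 * m - t) * (34561 * m + t) :=
    ⟨4 * (m ^ 2 - 1), by linear_combination -h⟩
  have hm : |m| ≤ 6652 := abs_le_of_sq_le_sq (by nlinarith [sq_nonneg t]) (by norm_num)
  have ht : |t| ≤ 34562 := abs_le_of_sq_le_sq (by nlinarith [sq_nonneg m]) (by norm_num)
  rw [abs_le] at hm ht
  have key : t = 34561 * m ∨ t = -(34561 * m) := by
    rcases hp.dvd_or_dvd hd with h1 | h1
    · left
      have := Int.eq_zero_of_abs_lt_dvd h1 (by rw [abs_lt]; constructor <;> linarith [hm.1, hm.2, ht.1, ht.2])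
      linarith
    · right
      have := Int.eq_zero_of_abs_lt_dvd h1 (by rw [abs_lt]; constructor <;> linarith [hm.1, hm.2, ht.1, ht.2])
      linarith
  have ht3 : t ^ 2 = 34561 ^ 2 * m ^ 2 := by rcases key with h1 | h1 <;> (rw [h1]; ring)
  have ht2 : (t - 34561) * (t + 34561) = 0 := by linarith
  clear hd
  rcases mul_eq_zero.1 ht2 with h1 | h1 <;> omega

lemma shanks_jacobi (hp : p = 298615687) (χ : MulChar (ZMod p) ℂ) (hχ : orderOf χ = 3) :
    jacobiSum χ χ + jacobiSum χ⁻¹ χ⁻¹ = 34561 := by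
  have hw := Complex.isPrimitiveRoot_exp 3 (by norm_num)
  set w := Complex.exp (2 * Real.pi * Complex.I / (3 : ℕ)) with hwdef
  have hw3 : w ^ 3 = 1 := hw.pow_eq_one
  have hw1 : w ≠ 1 := hw.ne_one (by norm_num)
  have hw2 : w ^ 2 + w + 1 = 0 := by
    have : (w - 1) * (w ^ 2 + w + 1) = 0 := by linear_combination hw3
    exact (mul_eq_zero.1 this).resolve_left (sub_ne_zero.2 hw1)
  have hχ3 : χ ^ 3 = 1 := by rw [← hχ, pow_orderOf_eq_one]
  have hχ1 : χ ≠ 1 := by rintro rfl; simp at hχ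
  have hχ2 : χ * χ ≠ 1 := by
    intro h; apply hχ1
    calc χ = χ ^ 3 * χ := by rw [hχ3, one_mul]
      _ = (χ * χ) * (χ * χ) := by simp only [pow_succ, pow_zero, one_mul, mul_assoc]
      _ = 1 := by rw [h, one_mul]
  obtain ⟨z, hz, hJ⟩ := exists_jacobiSum_eq_neg_one_add (by norm_num) hχ3 hχ3
    (by rw [ZMod.card, hp]; norm_num) hw
  obtain ⟨a, b, rfl⟩ := exists_of_mem_adjoin_cube hw2 hz
  have hconj : starRingEnd ℂ w = w ^ 2 := by
    have h1 : w * starRingEnd ℂ w = 1 := by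
      rw [Complex.mul_conj, Complex.normSq_eq_norm_sq, hw.norm'_eq_one (by norm_num)]; simp
    calc starRingEnd ℂ w = w ^ 3 * starRingEnd ℂ w := by rw [hw3, one_mul]
      _ = w ^ 2 * (w * starRingEnd ℂ w) := by ring
      _ = w ^ 2 := by rw [h1, mul_one]
  have hJ' : jacobiSum χ⁻¹ χ⁻¹ = starRingEnd ℂ (jacobiSum χ χ) := by
    simp only [jacobiSum, map_sum, map_mul, MulChar.star_apply', starRingEnd_apply]
  have hprod := jacobiSum_mul_jacobiSum_inv (F := ZMod p) (F' := ℂ) (by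
    rw [ringChar.eq_zero, ZMod.ringChar_zmod_n]; exact (Fact.out : p.Prime).ne_zero.symm) hχ1 hχ1 hχ2
  have e1 : jacobiSum χ χ = ((3 * b - 1 : ℤ) : ℂ) + ((3 * (b - a) : ℤ) : ℂ) * w := by
    rw [hJ]; push_cast
    linear_combination (b * w + a - 3 * b) * hw2
  have e2 : jacobiSum χ⁻¹ χ⁻¹ = ((3 * b - 1 : ℤ) : ℂ) + ((3 * (b - a) : ℤ) : ℂ) * w ^ 2 := by
    rw [hJ', e1, map_add, map_mul, hconj, map_intCast, map_intCast]
  have hsum : jacobiSum χ χ + jacobiSum χ⁻¹ χ⁻¹ = ((3 * b - 2 + 3 * a : ℤ) : ℂ) := by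
    rw [e1, e2]; push_cast; linear_combination (3 * (b - a) : ℂ) * hw2
  rw [hsum]
  have hn : (3 * b - 2 + 3 * a) ^ 2 + 27 * (b - a) ^ 2 = 4 * (298615687 : ℤ) := by
    rw [e1, e2, ZMod.card, hp] at hprod
    have : (((3 * b - 2 + 3 * a) ^ 2 + 27 * (b - a) ^ 2 : ℤ) : ℂ) = ((4 * (298615687 : ℤ) : ℤ) : ℂ) := by
      push_cast at hprod ⊢
      linear_combination 4 * hprod - 4 * (9 * (b - a) ^ 2) * hw3 - 4 * 3 * (3 * b - 1) * (b - a) * hw2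
    exact_mod_cast this
  have := shanks_repr hn (by omega)
  rw [this]; norm_num

end ShanksChar


section ShanksPeriods

open MulChar AddChar

variable {p : ℕ} [Fact p.Prime]

lemma shanks_cube_root {c v : ℂ} (hc : c ^ 2 + c + 1 = 0) (hv : v ^ 3 = 1) :
    v = 1 ∨ v = c ∨ v = c ^ 2 := by
  have h : (v - 1) * ((v - c) * (v - c ^ 2)) = 0 := by
    linear_combination hv + (- v ^ 2 + v * c - (c - 1)) * hc
  rcases mul_eq_zero.1 h with h | h
  · left; exact sub_eq_zero.1 h
  rcases mul_eq_zero.1 h with h | h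
  · right; left; exact sub_eq_zero.1 h
  · right; right; exact sub_eq_zero.1 h

lemma psi_isIntegral (x : ZMod p) : IsIntegral ℤ (ZMod.stdAddChar x : ℂ) := by
  refine IsIntegral.of_pow (n := p) (Fact.out : p.Prime).pos ?_
  rw [← AddChar.map_nsmul_eq_pow]
  simp only [nsmul_eq_mul, CharP.cast_eq_zero, zero_mul, AddChar.map_zero_eq_one]
  exact isIntegral_one

/-- The standard additive character with integral values. -/
noncomputable def psiR (x : ZMod p) : integralClosure ℤ ℂ := ⟨ZMod.stdAddChar x, psi_isIntegral x⟩

open Classical in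
/-- Gaussian periods. -/
noncomputable def period (χ : MulChar (ZMod p) ℂ) (u : ℂ) : integralClosure ℤ ℂ :=
  ∑ x : ZMod p, if χ x = u then psiR x else 0

lemma shanks_even (χ : MulChar (ZMod p) ℂ) (hχ : χ ^ 3 = 1) : χ (-1) = 1 := by
  have h1 : χ (-1) ^ 2 = 1 := by rw [← map_pow]; simp
  have h2 : χ (-1) ^ 3 = 1 := by
    rw [← MulChar.pow_apply' χ (by norm_num), hχ]
    exact MulChar.one_apply (by simp)
  calc χ (-1) = χ (-1) ^ 3 * χ (-1) := by rw [h2, one_mul]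
    _ = (χ (-1) ^ 2) ^ 2 := by ring
    _ = 1 := by rw [h1, one_pow]

lemma apply_cube (χ : MulChar (ZMod p) ℂ) (hχ : χ ^ 3 = 1) {x : ZMod p} (hx : x ≠ 0) :
    χ x ^ 3 = 1 := by
  rw [← MulChar.pow_apply' χ (by norm_num), hχ]
  exact MulChar.one_apply (isUnit_iff_ne_zero.2 hx)

lemma period_gauss (χ : MulChar (ZMod p) ℂ) (hχ : χ ^ 3 = 1) {c : ℂ} (hc : c ^ 2 + c + 1 = 0)
    {u : ℂ} (hu : u ^ 3 = 1) :
    3 * ((period χ u : integralClosure ℤ ℂ) : ℂ) + 1 =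
      u ^ 2 * gaussSum χ (ZMod.stdAddChar (N := p)) + u * gaussSum (χ ^ 2) (ZMod.stdAddChar (N := p)) := by
  classical
  have hψ : (ZMod.stdAddChar (N := p)) ≠ 1 := by
    intro h
    have h1 := ZMod.isPrimitive_stdAddChar p (a := 1) one_ne_zero
    exact h1 (by rw [h]; ext; simp)
  have h1 := gaussSum_one_left (R := ZMod p) (R' := ℂ) hψ
  have hp1 : 3 * ((period χ u : integralClosure ℤ ℂ) : ℂ) =
      gaussSum 1 (ZMod.stdAddChar (N := p)) +
      u ^ 2 * gaussSum χ (ZMod.stdAddChar (N := p)) + u * gaussSum (χ ^ 2) (ZMod.stdAddChar (N := p)) := by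
    simp only [gaussSum, Finset.mul_sum, ← Finset.sum_add_distrib, period, AddSubmonoidClass.coe_finsetSum]
    refine Finset.sum_congr rfl fun x _ => ?_
    rcases eq_or_ne x 0 with rfl | hx
    · have hu0 : (0 : ℂ) ≠ u := by rintro rfl; simp at hu
      simp [MulChar.map_zero, hu0]
    · have hx3 := apply_cube χ hχ hx
      rw [MulChar.one_apply (isUnit_iff_ne_zero.2 hx), MulChar.pow_apply' χ (by norm_num)]
      have key : (3 : ℂ) * (if χ x = u then 1 else 0) = 1 + u ^ 2 * χ x + u * χ x ^ 2 := by
        split_ifs with h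
        · rw [h]; linear_combination (-2 : ℂ) * hu
        · have h2 : (χ x - u) * (χ x ^ 2 + χ x * u + u ^ 2) = 0 := by linear_combination hx3 - hu
          have h3 := (mul_eq_zero.1 h2).resolve_left (sub_ne_zero.2 h)
          linear_combination (-u) * h3 + hu
      have : (((if χ x = u then psiR x else 0 : integralClosure ℤ ℂ)) : ℂ) =
          (if χ x = u then 1 else 0) * ZMod.stdAddChar x := by
        split_ifs <;> simp [psiR]
      rw [this]
      linear_combination (ZMod.stdAddChar x : ℂ) * key
  rw [hp1, h1]; ring

lemma shanks_gauss (hp : p = 298615687) (χ : MulChar (ZMod p) ℂ) (hχ : orderOf χ = 3) :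
    gaussSum χ (ZMod.stdAddChar (N := p)) * gaussSum (χ ^ 2) (ZMod.stdAddChar (N := p)) = 298615687 ∧
    gaussSum χ (ZMod.stdAddChar (N := p)) ^ 3 + gaussSum (χ ^ 2) (ZMod.stdAddChar (N := p)) ^ 3 = 298615687 * 34561 := by
  have hχ3 : χ ^ 3 = 1 := by rw [← hχ, pow_orderOf_eq_one]
  have hχ1 : χ ≠ 1 := by rintro rfl; simp at hχ
  have hinv : χ ^ 2 = χ⁻¹ := by
    rw [eq_inv_iff_mul_eq_one, ← pow_succ, hχ3]
  have hprim := ZMod.isPrimitive_stdAddChar p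
  have hchi' : orderOf (χ⁻¹) = 3 := by rw [orderOf_inv, hχ]
  have h1 := gaussSum_mul_gaussSum_pow_orderOf_sub_one hχ1 hprim
  have h2 := gaussSum_pow_eq_prod_jacobiSum (χ := χ) (by omega) hprim
  have h3 := gaussSum_pow_eq_prod_jacobiSum (χ := χ⁻¹) (by omega) hprim
  rw [hχ, shanks_even χ hχ3] at h1
  rw [hχ, shanks_even χ hχ3] at h2
  rw [hchi', shanks_even _ (by rw [inv_pow, hχ3, inv_one])] at h3
  have hI : Finset.Ico 1 (3 - 1) = {1} := rfl
  rw [hI, Finset.prod_singleton, pow_one] at h2 h3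
  have h4 := shanks_jacobi hp χ hχ
  have hcard : (Fintype.card (ZMod p) : ℂ) = 298615687 := by rw [ZMod.card, hp]; norm_num
  rw [hcard] at h1 h2 h3
  constructor
  · rw [one_mul] at h1; exact h1
  · rw [hinv, h2, h3, ← h4]; ring

lemma shanks_period_poly (hp : p = 298615687) (χ : MulChar (ZMod p) ℂ) (hχ : orderOf χ = 3)
    {c : ℂ} (hc : c ^ 2 + c + 1 = 0) :
    (∀ n : ℤ, ((n - 5760 : ℤ) - period χ 1) * ((n - 5760 : ℤ) - period χ c) *
      ((n - 5760 : ℤ) - period χ (c ^ 2)) =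
      ((n ^ 3 - 17279 * n ^ 2 - 17282 * n - 1 : ℤ) : integralClosure ℤ ℂ)) ∧
    period χ 1 + period χ c + period χ (c ^ 2) = -1 ∧
    3 * (period χ 1 * period χ c + period χ 1 * period χ (c ^ 2) + period χ c * period χ (c ^ 2)) =
      1 - 298615687 := by
  have hχ3 : χ ^ 3 = 1 := by rw [← hχ, pow_orderOf_eq_one]
  have hc3 : c ^ 3 = 1 := by linear_combination (c - 1) * hc
  obtain ⟨hg1, hg2⟩ := shanks_gauss hp χ hχ
  have q1 := period_gauss χ hχ3 hc (u := 1) (by norm_num)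
  have q2 := period_gauss χ hχ3 hc hc3
  have q3 := period_gauss χ hχ3 hc (u := c ^ 2) (by rw [← pow_mul, mul_comm, pow_mul, hc3, one_pow])
  have hc4 : (c ^ 2) ^ 2 = c := by linear_combination c * hc3
  rw [hc4] at q3
  set g := gaussSum χ (ZMod.stdAddChar (N := p))
  set g' := gaussSum (χ ^ 2) (ZMod.stdAddChar (N := p))
  generalize hA : period χ 1 = A at *
  generalize hB : period χ c = B at *
  generalize hC : period χ (c ^ 2) = C at *
  have q1' : (A : ℂ) = (g + g' - 1) / 3 := by linear_combination q1 / 3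
  have q2' : (B : ℂ) = (c ^ 2 * g + c * g' - 1) / 3 := by linear_combination q2 / 3
  have q3' : (C : ℂ) = (c * g + c ^ 2 * g' - 1) / 3 := by linear_combination q3 / 3
  have hc2 : c ^ 2 = -1 - c := by linear_combination hc
  have s1 : (A : ℂ) + B + C = -1 := by
    rw [q1', q2', q3', hc2]; ring
  have s2 : 3 * ((A : ℂ) * B + A * C + B * C) = 1 - 298615687 := by
    rw [q1', q2', q3', hc2]
    linear_combination (-1 : ℂ) * hg1 + (1/3) * (- g ^ 2 - g' ^ 2 + 2 * g * g') * hc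
  have s3 : 27 * ((A : ℂ) * B * C) = 298615687 * 34561 + 3 * 298615687 - 1 := by
    rw [q1', q2', q3', hc2]
    linear_combination hg2 + 3 * hg1 + ((-g ^ 2 * g' - g * g' ^ 2 - g ^ 3 - g' ^ 3) + (g ^ 2 + g' ^ 2 - 2 * g * g') + 2 * g * g' ^ 2 + 2 * g ^ 2 * g') * hc
  have hv : ∀ x : integralClosure ℤ ℂ, (integralClosure ℤ ℂ).val x = (x : ℂ) := fun _ => rfl
  have hinj : Function.Injective (integralClosure ℤ ℂ).val := Subtype.val_injective
  refine ⟨fun n => ?_, ?_, ?_⟩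
  · apply hinj
    simp only [map_mul, map_sub, map_intCast, Int.cast_sub, Int.cast_mul, Int.cast_pow, Int.cast_one, Int.cast_ofNat, map_pow, map_one, map_ofNat]
    simp only [hv]
    push_cast
    linear_combination (-((n : ℂ) - 5760) ^ 2) * s1 + ((n : ℂ) - 5760) / 3 * s2 - 1 / 27 * s3
  · apply hinj
    simp only [map_add, map_neg, map_one]
    simp only [hv]
    exact s1
  · apply hinj
    simp only [map_mul, map_add, map_sub, map_one, map_ofNat]
    simp only [hv]
    exact s2

lemma period_frob (χ : MulChar (ZMod p) ℂ) {q : ℕ} (hq : q.Prime) (hqp : (q : ZMod p) ≠ 0)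
    (m : Ideal (integralClosure ℤ ℂ)) [CharP (integralClosure ℤ ℂ ⧸ m) q] (u : ℂ) :
    (Ideal.Quotient.mk m (period χ u)) ^ q = Ideal.Quotient.mk m (period χ (u * χ q)) := by
  classical
  have : Fact q.Prime := ⟨hq⟩
  have hχq : χ q ≠ 0 := by
    have := (isUnit_iff_ne_zero.2 hqp).map χ
    exact this.ne_zero
  rw [period, period, map_sum, map_sum, sum_pow_char]
  refine Fintype.sum_equiv (Equiv.mulLeft₀ (q : ZMod p) hqp) _ _ fun x => ?_
  simp only [Equiv.mulLeft₀_apply, map_mul]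
  simp only [mul_comm u, mul_right_inj' hχq]
  rw [← map_pow]
  split_ifs with h
  · congr 1
    apply Subtype.val_injective
    change (ZMod.stdAddChar x : ℂ) ^ q = ZMod.stdAddChar ((q : ZMod p) * x)
    rw [← AddChar.map_nsmul_eq_pow, nsmul_eq_mul]
  · rw [zero_pow hq.ne_zero]

theorem shanks_chi_of_root (hp : p = 298615687) (χ : MulChar (ZMod p) ℂ) (hχ : orderOf χ = 3)
    {q : ℕ} (hq : q.Prime) (hqp : q ≠ p) (n : ℤ)
    (hn : (q : ℤ) ∣ n ^ 3 - 17279 * n ^ 2 - 17282 * n - 1) : χ q = 1 := by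
  have : Fact q.Prime := ⟨hq⟩
  have hχ3 : χ ^ 3 = 1 := by rw [← hχ, pow_orderOf_eq_one]
  have hq0 : (q : ZMod p) ≠ 0 := by
    rw [Ne, ZMod.natCast_eq_zero_iff]
    intro h
    exact hqp ((Nat.prime_dvd_prime_iff_eq Fact.out hq).1 h).symm
  by_contra hne
  set c := χ q with hcdef
  have hc3 : c ^ 3 = 1 := apply_cube χ hχ3 hq0
  have hc : c ^ 2 + c + 1 = 0 := by
    have : (c - 1) * (c ^ 2 + c + 1) = 0 := by linear_combination hc3
    exact (mul_eq_zero.1 this).resolve_left (sub_ne_zero.2 hne)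
  obtain ⟨h1, h2, h3⟩ := shanks_period_poly hp χ hχ hc
  have hmax : (Ideal.span {(q : ℤ)}).IsMaximal :=
    Int.ideal_span_isMaximal_of_prime q
  obtain ⟨m, hm, hmq⟩ := Ideal.exists_ideal_over_maximal_of_isIntegral
    (S := integralClosure ℤ ℂ) (Ideal.span {(q : ℤ)}) (by
      rw [(RingHom.injective_iff_ker_eq_bot _).1 (algebraMap ℤ (integralClosure ℤ ℂ)).injective_int]
      exact bot_le)
  let _ : Field (integralClosure ℤ ℂ ⧸ m) := Ideal.Quotient.field m
  have hz : ∀ a : ℤ, (q : ℤ) ∣ a → (a : integralClosure ℤ ℂ ⧸ m) = 0 := by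
    intro a ha
    have : a ∈ m.comap (algebraMap ℤ (integralClosure ℤ ℂ)) := by
      rw [hmq]; exact Ideal.mem_span_singleton.2 ha
    have := Ideal.Quotient.eq_zero_iff_mem.2 (Ideal.mem_comap.1 this)
    simpa using this
  have hcp : CharP (integralClosure ℤ ℂ ⧸ m) q := by
    rw [CharP.charP_iff_prime_eq_zero hq]
    exact_mod_cast hz q dvd_rfl
  have f0 := period_frob χ hq hq0 m 1
  have f1 := period_frob χ hq hq0 m c
  have f2 := period_frob χ hq hq0 m (c ^ 2)
  rw [← hcdef, one_mul] at f0
  rw [← hcdef, ← sq] at f1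
  rw [← hcdef, ← pow_succ, hc3] at f2
  have e1 := congrArg (Ideal.Quotient.mk m) (h1 n)
  have e2 := congrArg (Ideal.Quotient.mk m) h2
  have e3 := congrArg (Ideal.Quotient.mk m) h3
  simp only [map_mul, map_sub, map_add, map_neg, map_one, map_intCast, map_ofNat] at e1 e2 e3
  rw [hz _ hn] at e1
  set A := Ideal.Quotient.mk m (period χ 1)
  set B := Ideal.Quotient.mk m (period χ c)
  set C := Ideal.Quotient.mk m (period χ (c ^ 2))
  have hfix : ((n - 5760 : ℤ) : integralClosure ℤ ℂ ⧸ m) ^ q = ((n - 5760 : ℤ) : _) := by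
    have := map_intCast (frobenius (integralClosure ℤ ℂ ⧸ m) q) (n - 5760)
    simpa only [frobenius_def] using this
  have hall : A = B ∧ B = C := by
    rcases mul_eq_zero.1 e1 with e | e
    · rcases mul_eq_zero.1 e with e | e
      · rw [sub_eq_zero.1 e] at hfix
        have hB : B = A := by rw [← f0, hfix]
        refine ⟨hB.symm, ?_⟩
        rw [← f1, hB, f0, hB]
      · rw [sub_eq_zero.1 e] at hfix
        have hB : C = B := by rw [← f1, hfix]
        refine ⟨?_, hB.symm⟩
        rw [← f2, hB, f1, hB]
    · rw [sub_eq_zero.1 e] at hfix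
      have hB : A = C := by rw [← f2, hfix]
      refine ⟨?_, ?_⟩
      · rw [← f0, hB, f2, hB]
      · rw [← f0, hB, f2, hB]
  obtain ⟨hAB, hBC⟩ := hall
  rw [hAB, hBC] at e2 e3
  have hp0 : (p : integralClosure ℤ ℂ ⧸ m) = 0 := by
    rw [hp]; push_cast
    linear_combination e3 - (3 * C - 1) * e2
  have := (CharP.cast_eq_zero_iff (integralClosure ℤ ℂ ⧸ m) q p).1 hp0
  exact hqp ((Nat.prime_dvd_prime_iff_eq hq Fact.out).1 this)

end ShanksPeriods


section ShanksEuler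

open NumberField Ideal UniqueFactorizationMonoid

variable {K : Type*} [Field K] [NumberField K]

open Classical in
lemma ideal_eq_prod_of_factors {T : Finset (Ideal (𝓞 K))} {I : Ideal (𝓞 K)} (hI : I ≠ ⊥)
    (hT : ∀ P ∈ normalizedFactors I, P ∈ T) :
    I = ∏ P ∈ T.attach, (P : Ideal (𝓞 K)) ^ (Multiset.count (P : Ideal (𝓞 K)) (normalizedFactors I)) := by
  rw [Finset.prod_attach T (fun P => P ^ Multiset.count P (normalizedFactors I))]
  conv_lhs => rw [← Ideal.prod_normalizedFactors_eq_self hI, Finset.prod_multiset_count]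
  refine Finset.prod_subset (fun P hP => hT P (Multiset.mem_toFinset.1 hP)) fun P _ hP => ?_
  rw [Multiset.mem_toFinset] at hP
  rw [Multiset.count_eq_zero_of_notMem hP, pow_zero]

lemma rpow_neg_lt_one' {n : ℕ} (hn : 2 ≤ n) {s : ℝ} (hs : 0 < s) : (n : ℝ) ^ (-s) < 1 :=
  Real.rpow_lt_one_of_one_lt_of_neg (by exact_mod_cast hn) (by linarith)

lemma ideal_euler {s : ℝ} (hs : 0 < s) (T : Finset (Ideal (𝓞 K))) (hT : ∀ P ∈ T, 2 ≤ absNorm P)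
    (S : Finset (Ideal (𝓞 K)))
    (hS : ∀ I ∈ S, I ≠ ⊥ ∧ ∀ P ∈ normalizedFactors I, P ∈ T) :
    ∑ I ∈ S, (absNorm I : ℝ) ^ (-s) ≤ ∏ P ∈ T, (1 - (absNorm P : ℝ) ^ (-s))⁻¹ := by
  classical
  set M := S.sup (fun I => Multiset.card (normalizedFactors I)) + 1 with hM
  have h1 : ∏ P ∈ T, ∑ k ∈ Finset.range M, ((absNorm P : ℝ) ^ (-s)) ^ k ≤
      ∏ P ∈ T, (1 - (absNorm P : ℝ) ^ (-s))⁻¹ := by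
    refine Finset.prod_le_prod (fun P _ => Finset.sum_nonneg fun k _ => by positivity) fun P hP => ?_
    have hx := rpow_neg_lt_one' (hT P hP) hs
    have hx0 : 0 ≤ (absNorm P : ℝ) ^ (-s) := by positivity
    rw [← one_div, le_div_iff₀ (by linarith), geom_sum_mul_neg]
    have : 0 ≤ ((absNorm P : ℝ) ^ (-s)) ^ M := by positivity
    linarith
  refine le_trans ?_ h1
  rw [Finset.prod_sum]
  let φ : Ideal (𝓞 K) → (∀ P ∈ T, ℕ) := fun I P _ => Multiset.count P (normalizedFactors I)
  have hinj : Set.InjOn φ S := by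
    intro I hI J hJ h
    rw [ideal_eq_prod_of_factors (hS I hI).1 (hS I hI).2, ideal_eq_prod_of_factors (hS J hJ).1 (hS J hJ).2]
    refine Finset.prod_congr rfl fun P _ => ?_
    congr 1
    exact congrFun (congrFun h P.1) P.2
  have hval : ∀ I ∈ S, (absNorm I : ℝ) ^ (-s) =
      ∏ P ∈ T.attach, ((absNorm (P : Ideal (𝓞 K)) : ℝ) ^ (-s)) ^ (φ I P.1 P.2) := by
    intro I hI
    conv_lhs => rw [ideal_eq_prod_of_factors (hS I hI).1 (hS I hI).2, map_prod, Nat.cast_prod]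
    rw [← Real.finset_prod_rpow _ _ (fun P _ => by positivity)]
    refine Finset.prod_congr rfl fun P _ => ?_
    rw [map_pow, Nat.cast_pow, ← Real.rpow_natCast, ← Real.rpow_natCast, ← Real.rpow_mul (by positivity),
      ← Real.rpow_mul (by positivity), mul_comm]
  rw [Finset.sum_congr rfl hval, ← Finset.sum_image (f := fun (ψ : ∀ P ∈ T, ℕ) => ∏ P ∈ T.attach, ((absNorm (P : Ideal (𝓞 K)) : ℝ) ^ (-s)) ^ (ψ P.1 P.2)) hinj]
  refine Finset.sum_le_sum_of_subset_of_nonneg ?_ fun ψ _ _ => Finset.prod_nonneg fun P _ => by positivity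
  intro ψ hψ
  obtain ⟨I, hI, rfl⟩ := Finset.mem_image.1 hψ
  rw [Finset.mem_pi]
  intro P hP
  rw [Finset.mem_range, hM]
  have h2 := Finset.le_sup (f := fun I => Multiset.card (normalizedFactors I)) hI
  have h3 : φ I P hP ≤ Multiset.card (normalizedFactors I) := Multiset.count_le_card _ _
  exact Nat.lt_succ_of_le (h3.trans h2)

open Classical in
/-- primes above a rational prime -/
noncomputable def primesAbove (K : Type*) [Field K] [NumberField K] (q : ℕ) : Finset (Ideal (𝓞 K)) :=
  (normalizedFactors (span {(q : 𝓞 K)})).toFinset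

lemma mem_primesAbove {q : ℕ} (hq : q.Prime) {P : Ideal (𝓞 K)} :
    P ∈ primesAbove K q ↔ P.IsPrime ∧ (q : 𝓞 K) ∈ P := by
  classical
  have h0 : span {(q : 𝓞 K)} ≠ ⊥ := by
    rw [Ne, span_singleton_eq_bot]; exact_mod_cast hq.ne_zero
  rw [primesAbove, Multiset.mem_toFinset, Ideal.mem_normalizedFactors_iff h0, span_singleton_le_iff_mem]

lemma absNorm_span_nat (hd : Module.finrank ℚ K = 3) (q : ℕ) : absNorm (span {(q : 𝓞 K)}) = q ^ 3 := by
  have := Ideal.absNorm_span_natCast (S := 𝓞 K) q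
  rw [this, RingOfIntegers.rank, hd]

lemma primesAbove_norm (hd : Module.finrank ℚ K = 3) {q : ℕ} (hq : q.Prime) {P : Ideal (𝓞 K)}
    (hP : P ∈ primesAbove K q) : ∃ f, absNorm P = q ^ (f + 1) := by
  obtain ⟨h1, h2⟩ := (mem_primesAbove hq).1 hP
  have hdvd : absNorm P ∣ q ^ 3 := by
    rw [← absNorm_span_nat (K := K) hd]
    exact Ideal.absNorm_dvd_absNorm_of_le ((span_singleton_le_iff_mem _).2 h2)
  obtain ⟨k, hk, h⟩ := (Nat.dvd_prime_pow hq).1 hdvd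
  have : k ≠ 0 := by
    rintro rfl
    rw [pow_zero, absNorm_eq_one_iff] at h
    exact h1.ne_top h
  exact ⟨k - 1, by rw [h]; congr 1; omega⟩

lemma primesAbove_prod (hd : Module.finrank ℚ K = 3) {q : ℕ} (hq : q.Prime) :
    ((normalizedFactors (span {(q : 𝓞 K)})).map absNorm).prod = q ^ 3 := by
  have h0 : span {(q : 𝓞 K)} ≠ ⊥ := by
    rw [Ne, span_singleton_eq_bot]; exact_mod_cast hq.ne_zero
  rw [← absNorm_span_nat (K := K) hd, ← map_multiset_prod, Ideal.prod_normalizedFactors_eq_self h0]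

lemma card_factors_le (hd : Module.finrank ℚ K = 3) {q : ℕ} (hq : q.Prime) (k : ℕ) 
    (h : ∀ P ∈ primesAbove K q, q ^ k ≤ absNorm P) :
    k * Multiset.card (normalizedFactors (span {(q : 𝓞 K)})) ≤ 3 := by
  have h1 := primesAbove_prod (K := K) hd hq
  have h2 : (q ^ k) ^ Multiset.card ((normalizedFactors (span {(q : 𝓞 K)})).map absNorm) ≤ 
    ((normalizedFactors (span {(q : 𝓞 K)})).map absNorm).prod := by
    refine Multiset.pow_card_le_prod fun x hx => ?_
    obtain ⟨P, hP, rfl⟩ := Multiset.mem_map.1 hx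
    refine h P ?_
    rw [primesAbove, Multiset.mem_toFinset]; exact hP
  rw [h1, Multiset.card_map, ← pow_mul] at h2
  exact (Nat.pow_le_pow_iff_right hq.one_lt).1 h2

lemma local_le (hd : Module.finrank ℚ K = 3) {q : ℕ} (hq : q.Prime) {s : ℝ} (hs : 0 < s) :
    ∏ P ∈ primesAbove K q, (1 - (absNorm P : ℝ) ^ (-s))⁻¹ ≤ ((1 - (q : ℝ) ^ (-s))⁻¹) ^ 3 := by
  classical
  have hx := rpow_neg_lt_one' hq.two_le hs
  have hx0 : 0 ≤ (q : ℝ) ^ (-s) := by positivity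
  have hnorm : ∀ P ∈ primesAbove K q, q ≤ absNorm P := by
    intro P hP
    obtain ⟨f, hf⟩ := primesAbove_norm hd hq hP
    rw [hf]; exact Nat.le_self_pow (by omega) q
  have hcard := card_factors_le hd hq 1 (by simpa using hnorm)
  have hc2 : (primesAbove K q).card ≤ 3 := by
    have := Multiset.toFinset_card_le (normalizedFactors (span {(q : 𝓞 K)}))
    rw [primesAbove]; omega
  have h1 : ∏ P ∈ primesAbove K q, (1 - (absNorm P : ℝ) ^ (-s))⁻¹ ≤ 
      ∏ P ∈ primesAbove K q, (1 - (q : ℝ) ^ (-s))⁻¹ := by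
    have hle : ∀ P ∈ primesAbove K q, (absNorm P : ℝ) ^ (-s) ≤ (q : ℝ) ^ (-s) := fun P hP => 
      Real.rpow_le_rpow_of_nonpos (by exact_mod_cast hq.pos) (by exact_mod_cast hnorm P hP) (by linarith)
    refine Finset.prod_le_prod (fun P hP => ?_) fun P hP => ?_
    · have := hle P hP
      exact inv_nonneg.2 (by linarith)
    · have := hle P hP
      exact inv_anti₀ (by linarith) (by linarith)
  refine h1.trans ?_
  rw [Finset.prod_const]
  refine pow_le_pow_right₀ ?_ hc2
  exact (one_le_inv₀ (by linarith)).2 (by linarith)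

lemma local_inert (hd : Module.finrank ℚ K = 3) {q : ℕ} (hq : q.Prime) {s : ℝ} (hs : 0 < s)
    (h : ∀ P ∈ primesAbove K q, absNorm P ≠ q) :
    ∏ P ∈ primesAbove K q, (1 - (absNorm P : ℝ) ^ (-s))⁻¹ = (1 - ((q : ℝ) ^ (-s)) ^ 3)⁻¹ := by
  classical
  have hcard := card_factors_le (K := K) hd hq 2 (fun P hP => by
    obtain ⟨f, hf⟩ := primesAbove_norm hd hq hP
    have := h P hP
    rw [hf]
    refine Nat.pow_le_pow_right hq.pos ?_
    rcases f with _ | f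
    · simp [hf] at this
    · omega)
  have hprod := primesAbove_prod (K := K) hd hq
  rcases Nat.lt_or_ge (Multiset.card (normalizedFactors (span {(q : 𝓞 K)}))) 1 with h0 | h1
  · have h0 : normalizedFactors (span {(q : 𝓞 K)}) = 0 := Multiset.card_eq_zero.1 (by omega)
    rw [h0] at hprod
    simp at hprod
    exact absurd hprod.symm (Nat.one_lt_pow (by norm_num) hq.one_lt).ne'
  · obtain ⟨P, hP⟩ := Multiset.card_eq_one.1 (show Multiset.card (normalizedFactors (span {(q : 𝓞 K)})) = 1 by omega)
    rw [hP] at hprod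
    simp only [Multiset.map_singleton, Multiset.prod_singleton] at hprod
    rw [primesAbove, hP, Multiset.toFinset_singleton, Finset.prod_singleton, hprod, Nat.cast_pow,
      ← Real.rpow_natCast, ← Real.rpow_natCast, ← Real.rpow_mul (by positivity),
      ← Real.rpow_mul (by positivity), mul_comm]

end ShanksEuler


section ShanksEuler2

open NumberField Ideal UniqueFactorizationMonoid Filter Topology

variable {K : Type*} [Field K] [NumberField K] 

lemma exists_int_of_norm_prime {q : ℕ} (hq : q.Prime) {P : Ideal (𝓞 K)} (hP : absNorm P = q) (x : 𝓞 K) :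
    ∃ n : ℤ, x - n ∈ P := by
  have : Fact q.Prime := ⟨hq⟩
  have hcard : Nat.card (𝓞 K ⧸ P) = q := by
    rw [← hP, absNorm_apply, Submodule.cardQuot_apply]
  have hfin : Finite (𝓞 K ⧸ P) := Nat.finite_of_card_ne_zero (by rw [hcard]; exact hq.ne_zero)
  have hz : ((q : ℕ) : 𝓞 K ⧸ P) = 0 := by
    have := Fintype.ofFinite (𝓞 K ⧸ P)
    rw [← hcard, Nat.card_eq_fintype_card]; exact Nat.cast_card_eq_zero _
  have hnt : Nontrivial (𝓞 K ⧸ P) := by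
    rw [← Finite.one_lt_card_iff_nontrivial, hcard]; exact hq.one_lt
  have : CharP (𝓞 K ⧸ P) q := (CharP.charP_iff_prime_eq_zero hq).2 hz
  have hbij : Function.Bijective (ZMod.castHom (dvd_refl q) (𝓞 K ⧸ P)) := by
    refine (Nat.bijective_iff_injective_and_card _).2 ⟨(ZMod.castHom (dvd_refl q) (𝓞 K ⧸ P)).injective, ?_⟩
    rw [hcard, Nat.card_zmod]
  obtain ⟨z, hz⟩ := hbij.2 (Ideal.Quotient.mk P x)
  obtain ⟨n, rfl⟩ := ZMod.intCast_surjective z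
  refine ⟨n, ?_⟩
  rw [← Ideal.Quotient.eq_zero_iff_mem, map_sub, ← hz]
  simp

variable {α : K} (hα : α ^ 3 - 17279 * α ^ 2 - 17282 * α - 1 = 0)
  (hgen : Algebra.adjoin ℚ {α} = ⊤)

include hα

lemma shanks_root_of_norm (θ : 𝓞 K) (hθ : (θ : K) = α) {q : ℕ} (hq : q.Prime) {P : Ideal (𝓞 K)}
    (hP : absNorm P = q) : ∃ n : ℤ, (q : ℤ) ∣ n ^ 3 - 17279 * n ^ 2 - 17282 * n - 1 := by
  obtain ⟨n, hn⟩ := exists_int_of_norm_prime hq hP θ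
  refine ⟨n, ?_⟩
  have hr : θ ^ 3 - 17279 * θ ^ 2 - 17282 * θ - 1 = 0 := shanks_theta_root hα θ hθ
  have hmem : ((n ^ 3 - 17279 * n ^ 2 - 17282 * n - 1 : ℤ) : 𝓞 K) ∈ P := by
    have e : ((n ^ 3 - 17279 * n ^ 2 - 17282 * n - 1 : ℤ) : 𝓞 K) =
      -(θ ^ 2 + θ * n + n ^ 2 - 17279 * (θ + n) - 17282) * (θ - n) := by
      push_cast
      linear_combination hr
    rw [e]
    exact P.mul_mem_left _ hn
  by_contra hnd
  have hcop : IsCoprime (q : ℤ) (n ^ 3 - 17279 * n ^ 2 - 17282 * n - 1) :=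
    (Prime.coprime_iff_not_dvd (Nat.prime_iff_prime_int.1 hq)).2 hnd
  obtain ⟨a, b, hab⟩ := hcop
  have hqP : (q : 𝓞 K) ∈ P := by rw [← hP]; exact absNorm_mem P
  have h1 : (1 : 𝓞 K) ∈ P := by
    have := congrArg (Int.cast : ℤ → 𝓞 K) hab
    rw [Int.cast_add, Int.cast_mul, Int.cast_mul, Int.cast_one] at this
    rw [← this]
    exact P.add_mem (P.mul_mem_left _ (by simpa using hqP)) (P.mul_mem_left _ hmem)
  rw [← Ideal.eq_top_iff_one, ← absNorm_eq_one_iff, hP] at h1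
  exact hq.one_lt.ne' h1

include hgen

lemma shanks_local {p : ℕ} [Fact p.Prime] (hp : p = 298615687) (χ : MulChar (ZMod p) ℂ) (hχ : orderOf χ = 3)
    (θ : 𝓞 K) (hθ : (θ : K) = α) {q : ℕ} (hq : q.Prime) {s : ℝ} (hs : 0 < s) :
    ∏ P ∈ primesAbove K q, (1 - (absNorm P : ℝ) ^ (-s))⁻¹ ≤
      (if q = p then (1 - (p : ℝ) ^ (-s))⁻¹ ^ 2 else 1) *
       (‖(1 - (q : ℂ) ^ (-(s : ℂ)))⁻¹‖ * ‖(1 - χ q * (q : ℂ) ^ (-(s : ℂ)))⁻¹‖ ^ 2) := by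
  have hd := shanks_finrank hα hgen
  have hχ3 : χ ^ 3 = 1 := by rw [← hχ, pow_orderOf_eq_one]
  have hx := rpow_neg_lt_one' hq.two_le hs
  have hx0 : 0 ≤ (q : ℝ) ^ (-s) := by positivity
  have hcast : (q : ℂ) ^ (-(s : ℂ)) = (((q : ℝ) ^ (-s) : ℝ) : ℂ) := by
    rw [Complex.ofReal_cpow (by positivity)]; push_cast; rfl
  rw [hcast]
  have hreal : ‖(1 - (((q : ℝ) ^ (-s) : ℝ) : ℂ))⁻¹‖ = (1 - (q : ℝ) ^ (-s))⁻¹ := by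
    rw [norm_inv, ← Complex.ofReal_one, ← Complex.ofReal_sub, Complex.norm_real, Real.norm_of_nonneg (by linarith)]
  rw [hreal]
  have hle := local_le (K := K) hd hq hs
  by_cases hqp : q = p
  · have h0 : χ q = 0 := by
      rw [hqp, CharP.cast_eq_zero]; exact MulChar.map_zero χ
    rw [if_pos hqp, h0, zero_mul, sub_zero, inv_one, norm_one, one_pow, mul_one, ← hqp, ← pow_succ]
    exact hle
  rw [if_neg hqp, one_mul]
  have hq0 : (q : ZMod p) ≠ 0 := by
    rw [Ne, ZMod.natCast_eq_zero_iff]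
    intro h
    exact hqp ((Nat.prime_dvd_prime_iff_eq Fact.out hq).1 h).symm
  by_cases h1 : χ q = 1
  · rw [h1, one_mul, hreal, ← pow_succ']
    exact hle
  · rw [local_inert hd hq hs (fun P _ hPq => by
      obtain ⟨n, hn⟩ := shanks_root_of_norm hα θ hθ hq hPq
      exact h1 (shanks_chi_of_root hp χ hχ hq hqp n hn))]
    set x := (q : ℝ) ^ (-s)
    set c := χ q
    have hc3 : c ^ 3 = 1 := apply_cube χ hχ3 hq0
    have hc : c ^ 2 + c + 1 = 0 := by
      have : (c - 1) * (c ^ 2 + c + 1) = 0 := by linear_combination hc3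
      exact (mul_eq_zero.1 this).resolve_left (sub_ne_zero.2 h1)
    have hn1 : ‖c‖ = 1 := Complex.norm_eq_one_of_pow_eq_one hc3 (by norm_num)
    have hconj : (starRingEnd ℂ) c = c ^ 2 := by
      have h2 : c * (starRingEnd ℂ) c = 1 := by rw [Complex.mul_conj, Complex.normSq_eq_norm_sq, hn1]; norm_num
      have hcne : c ≠ 0 := by intro h; rw [h] at hn1; simp at hn1
      apply mul_left_cancel₀ hcne
      rw [h2]; linear_combination -hc3
    have hnorm : ‖1 - c * (x : ℂ)‖ ^ 2 = 1 + x + x ^ 2 := by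
      have : ((‖1 - c * (x : ℂ)‖ ^ 2 : ℝ) : ℂ) = ((1 + x + x ^ 2 : ℝ) : ℂ) := by
        rw [← Complex.normSq_eq_norm_sq, ← Complex.mul_conj]
        simp only [map_sub, map_one, map_mul, hconj, Complex.conj_ofReal]
        push_cast
        linear_combination (-(x : ℂ)) * hc + (x : ℂ) ^ 2 * hc3
      exact_mod_cast this
    rw [norm_inv, inv_pow, hnorm, ← mul_inv]
    apply le_of_eq
    congr 1
    ring

/-- Partial sums of the Dedekind zeta function are bounded by the Euler product. -/
lemma shanks_partial {p : ℕ} [Fact p.Prime] (hp : p = 298615687) (χ : DirichletCharacter ℂ p) (hχ : orderOf χ = 3)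
    (θ : 𝓞 K) (hθ : (θ : K) = α) {s : ℝ} (hs : 1 < s) (S : Finset (Ideal (𝓞 K))) (hS : ∀ I ∈ S, I ≠ ⊥) :
    ∑ I ∈ S, (absNorm I : ℝ) ^ (-s) ≤ (1 - (p : ℝ) ^ (-s))⁻¹ ^ 2 *
      (‖riemannZeta s‖ * ‖LSeries (fun n => χ n) s‖ ^ 2) := by
  classical
  have hd := shanks_finrank hα hgen
  have hs' : 1 < (s : ℂ).re := by simpa using hs
  have t1 := (riemannZeta_eulerProduct hs').norm
  have t2 := (DirichletCharacter.LSeries_eulerProduct χ hs').norm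
  have t3 := (t1.mul (t2.pow 2)).const_mul ((1 - (p : ℝ) ^ (-s))⁻¹ ^ 2)
  refine ge_of_tendsto t3 ?_
  obtain ⟨N, hN⟩ : ∃ N : ℕ, ∀ I ∈ S, absNorm I < N :=
    ⟨S.sup absNorm + 1, fun I hI => Nat.lt_succ_of_le (Finset.le_sup (f := absNorm) hI)⟩
  filter_upwards [eventually_ge_atTop N] with M hM
  set T : Finset (Ideal (𝓞 K)) := (Nat.primesBelow M).biUnion (primesAbove K) with hT
  have h1 : ∑ I ∈ S, (absNorm I : ℝ) ^ (-s) ≤ ∏ P ∈ T, (1 - (absNorm P : ℝ) ^ (-s))⁻¹ := by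
    refine ideal_euler (by linarith) T ?_ S fun I hI => ⟨hS I hI, fun P hP => ?_⟩
    · intro P hP
      obtain ⟨q, hq, hPq⟩ := Finset.mem_biUnion.1 hP
      have hq := Nat.prime_of_mem_primesBelow hq
      obtain ⟨f, hf⟩ := primesAbove_norm hd hq hPq
      rw [hf]
      exact hq.two_le.trans (Nat.le_self_pow (by omega) q)
    · obtain ⟨hPp, hIP⟩ := (Ideal.mem_normalizedFactors_iff (hS I hI)).1 hP
      have hPI : absNorm P ∣ absNorm I := Ideal.absNorm_dvd_absNorm_of_le hIP
      have hI0 : absNorm I ≠ 0 := by rw [Ne, absNorm_eq_zero_iff]; exact hS I hI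
      have hne : absNorm P ≠ 1 := by rw [Ne, absNorm_eq_one_iff]; exact hPp.ne_top
      have hmem : ((absNorm P : ℕ) : 𝓞 K) ∈ P := absNorm_mem P
      have hP0 : absNorm P ≠ 0 := fun h => hI0 (Nat.eq_zero_of_zero_dvd (h ▸ hPI))
      -- some prime factor of the norm is in P
      have key : ∃ q ∈ (absNorm P).primeFactorsList, ((q : ℕ) : 𝓞 K) ∈ P := by
        rw [← Nat.prod_primeFactorsList hP0, Nat.cast_list_prod] at hmem
        have := (hPp.multiset_prod_mem_iff_exists_mem ((absNorm P).primeFactorsList.map (Nat.cast : ℕ → 𝓞 K))).1 (by simpa using hmem)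
        obtain ⟨y, hy, hyP⟩ := this
        obtain ⟨q, hq, rfl⟩ := List.mem_map.1 (Multiset.mem_coe.1 hy)
        exact ⟨q, hq, hyP⟩
      obtain ⟨q, hq, hqP⟩ := key
      have hqp := Nat.prime_of_mem_primeFactorsList hq
      have hqd := Nat.dvd_of_mem_primeFactorsList hq
      refine Finset.mem_biUnion.2 ⟨q, ?_, (mem_primesAbove hqp).2 ⟨hPp, hqP⟩⟩
      refine Nat.mem_primesBelow.2 ⟨?_, hqp⟩
      have := Nat.le_of_dvd (Nat.pos_of_ne_zero hI0) (hqd.trans hPI)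
      have := hN I hI
      omega
  refine h1.trans ?_
  have hpw : Set.PairwiseDisjoint (↑(Nat.primesBelow M) : Set ℕ) (primesAbove K) := by
    intro q hq r hr hqr
    refine Finset.disjoint_left.2 fun P hP hP' => hqr ?_
    have hq := Nat.prime_of_mem_primesBelow (Finset.mem_coe.1 hq)
    have hr := Nat.prime_of_mem_primesBelow (Finset.mem_coe.1 hr)
    obtain ⟨f, hf⟩ := primesAbove_norm hd hq hP
    obtain ⟨g, hg⟩ := primesAbove_norm hd hr hP'
    have : q ∣ r ^ (g + 1) := by rw [← hg, hf]; exact dvd_pow_self q (by omega)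
    exact (Nat.prime_dvd_prime_iff_eq hq hr).1 (hq.dvd_of_dvd_pow this)
  rw [hT, Finset.prod_biUnion hpw]
  refine (Finset.prod_le_prod (fun q hq => ?_) fun q hq => shanks_local hα hgen hp χ hχ θ hθ (Nat.prime_of_mem_primesBelow hq) (by linarith)).trans ?_
  · refine Finset.prod_nonneg fun P hP => ?_
    have hq := Nat.prime_of_mem_primesBelow hq
    obtain ⟨f, hf⟩ := primesAbove_norm hd hq hP
    have := rpow_neg_lt_one' (n := absNorm P) (by rw [hf]; exact hq.two_le.trans (Nat.le_self_pow (by omega) q)) (show 0 < s by linarith)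
    exact inv_nonneg.2 (by linarith)
  · rw [Finset.prod_mul_distrib, Finset.prod_mul_distrib, Finset.prod_pow, norm_prod, norm_prod]
    refine mul_le_mul_of_nonneg_right ?_ (by positivity)
    have hx := rpow_neg_lt_one' (Fact.out : p.Prime).two_le (show 0 < s by linarith)
    have hx0 : 0 ≤ (p : ℝ) ^ (-s) := by positivity
    rw [Finset.prod_ite_eq']
    split_ifs
    · exact le_rfl
    · exact one_le_pow₀ ((one_le_inv₀ (by linarith)).2 (by linarith))

theorem shanks_zeta_le {p : ℕ} [Fact p.Prime] (hp : p = 298615687) (χ : DirichletCharacter ℂ p) (hχ : orderOf χ = 3)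
    (θ : 𝓞 K) (hθ : (θ : K) = α) {s : ℝ} (hs : 1 < s) :
    ‖dedekindZeta K s‖ ≤ (1 - (p : ℝ) ^ (-s))⁻¹ ^ 2 *
      (‖riemannZeta s‖ * ‖LSeries (fun n => χ n) s‖ ^ 2) := by
  classical
  rw [dedekindZeta, LSeries]
  by_cases hsum : Summable (LSeries.term (fun n ↦ (Nat.card {I : Ideal (𝓞 K) // absNorm I = n} : ℂ)) s)
  swap
  · rw [tsum_eq_zero_of_not_summable hsum, norm_zero]; positivity
  refine le_of_tendsto hsum.hasSum.tendsto_sum_nat.norm (Eventually.of_forall fun X => ?_)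
  have hfin : {I : Ideal (𝓞 K) | absNorm I ≤ X}.Finite := Ideal.finite_setOfPred_absNorm_le X
  set S : Finset (Ideal (𝓞 K)) := hfin.toFinset.filter (fun I => I ≠ ⊥ ∧ absNorm I < X) with hSdef
  refine le_trans ?_ (shanks_partial hα hgen hp χ hχ θ hθ hs S (fun I hI => (Finset.mem_filter.1 hI).2.1))
  refine (norm_sum_le _ _).trans (le_of_eq ?_)
  rw [← Finset.sum_fiberwise_of_maps_to (s := S) (t := Finset.range X) (g := absNorm)
    (fun I hI => Finset.mem_range.2 (Finset.mem_filter.1 hI).2.2)]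
  refine Finset.sum_congr rfl fun n hn => ?_
  rw [Finset.mem_range] at hn
  rcases Nat.eq_zero_or_pos n with rfl | hn0
  · rw [LSeries.term_zero, norm_zero]
    refine (Finset.sum_eq_zero fun I hI => ?_).symm
    rw [Finset.mem_filter, hSdef, Finset.mem_filter] at hI
    exact absurd (absNorm_eq_zero_iff.1 hI.2) hI.1.2.1
  · rw [LSeries.term_of_ne_zero hn0.ne']
    have : ∀ I ∈ S.filter (fun I => absNorm I = n), (absNorm I : ℝ) ^ (-s) = (n : ℝ) ^ (-s) := by
      intro I hI
      rw [(Finset.mem_filter.1 hI).2]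
    rw [Finset.sum_congr rfl this, Finset.sum_const, nsmul_eq_mul, norm_div, Complex.norm_natCast,
      Complex.norm_natCast_cpow_of_pos hn0, Complex.ofReal_re, Real.rpow_neg (by positivity), div_eq_mul_inv]
    congr 2
    refine Nat.subtype_card _ fun I => ?_
    rw [Finset.mem_filter, hSdef, Finset.mem_filter, Set.Finite.mem_toFinset]
    refine ⟨fun h => h.2, fun h => ⟨⟨?_, ?_, ?_⟩, h⟩⟩
    · change absNorm I ≤ X; omega
    · rw [Ne, ← absNorm_eq_zero_iff]; omega
    · omega

end ShanksEuler2


section ShanksFejer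

open Finset

/-- First partial sums. -/
def ps1 (a : ℕ → ℂ) (N : ℕ) : ℂ := ∑ n ∈ range N, a n

/-- Second partial sums. -/
def ps2 (a : ℕ → ℂ) (N : ℕ) : ℂ := ∑ n ∈ range N, ps1 a (n + 1)

lemma abel_twice (a : ℕ → ℂ) (g : ℕ → ℝ) (X : ℕ) :
    ∑ n ∈ range X, a n * g n = ps1 a X * g X + ps2 a X * ((g X - g (X + 1) : ℝ) : ℂ) +
      ∑ n ∈ range X, ps2 a (n + 1) * (((g n - g (n + 1)) - (g (n + 1) - g (n + 2)) : ℝ) : ℂ) := by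
  induction X with
  | zero => simp [ps1, ps2]
  | succ X ih =>
    rw [sum_range_succ, ih, sum_range_succ]
    have h1 : ps1 a (X + 1) = ps1 a X + a X := sum_range_succ _ _
    have h2 : ps2 a (X + 1) = ps2 a X + ps1 a (X + 1) := sum_range_succ _ _
    rw [h2, h1]
    push_cast
    ring

lemma abel_twice_one (g : ℕ → ℝ) (X : ℕ) :
    X * (g X - g (X + 1)) +
      ∑ n ∈ range X, ((n : ℝ) + 1) * ((g n - g (n + 1)) - (g (n + 1) - g (n + 2))) = g 0 - g X := by
  induction X with
  | zero => simp
  | succ X ih =>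
    rw [sum_range_succ]
    push_cast
    linear_combination ih

lemma abel_bound (a : ℕ → ℂ) (g : ℕ → ℝ) {C : ℝ} (hC : ∀ n, ‖ps2 a n‖ ≤ C * n) (hC0 : 0 ≤ C)
    (ha : ∀ n, ‖a n‖ ≤ 1) (hg0 : ∀ n, 0 ≤ g n)
    (hg1 : ∀ n, g (n + 1) ≤ g n) (hg2 : ∀ n, 2 * g (n + 1) ≤ g n + g (n + 2)) (X : ℕ) :
    ‖∑ n ∈ range X, a n * g n‖ ≤ X * g X + C * g 0 := by
  rw [abel_twice]
  have h1 : ‖ps1 a X * g X‖ ≤ X * g X := by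
    rw [norm_mul, Complex.norm_real, Real.norm_of_nonneg (hg0 X)]
    refine mul_le_mul_of_nonneg_right ?_ (hg0 X)
    refine (norm_sum_le _ _).trans ((sum_le_sum fun n _ => ha n).trans ?_)
    simp
  have h2 : ‖ps2 a X * ((g X - g (X + 1) : ℝ) : ℂ)‖ ≤ C * X * (g X - g (X + 1)) := by
    have := hg1 X
    rw [norm_mul, Complex.norm_real, Real.norm_of_nonneg (by linarith)]
    exact mul_le_mul_of_nonneg_right (hC X) (by linarith)
  have h3 : ‖∑ n ∈ range X, ps2 a (n + 1) * (((g n - g (n + 1)) - (g (n + 1) - g (n + 2)) : ℝ) : ℂ)‖ ≤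
      ∑ n ∈ range X, C * (((n : ℝ) + 1) * ((g n - g (n + 1)) - (g (n + 1) - g (n + 2)))) := by
    refine (norm_sum_le _ _).trans (sum_le_sum fun n _ => ?_)
    have := hg2 n
    rw [norm_mul, Complex.norm_real, Real.norm_of_nonneg (by linarith), ← mul_assoc]
    refine mul_le_mul_of_nonneg_right ?_ (by linarith)
    simpa using hC (n + 1)
  have h4 := abel_twice_one g X
  rw [← mul_sum] at h3
  have h5 : 0 ≤ C * g X := mul_nonneg hC0 (hg0 X)
  refine (norm_add₃_le).trans ?_
  have h6 := congrArg (C * ·) h4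
  simp only [mul_add, mul_sub] at h6
  simp only [mul_sub] at h2 h3 ⊢
  linarith

lemma rpow_tangent {x y s : ℝ} (hx : 0 < x) (hy : 0 < y) (hs : 0 < s) :
    x ^ (-s) * (1 + s * (x - y) / x) ≤ y ^ (-s) := by
  have h1 : y ^ (-s) = x ^ (-s) * (y / x) ^ (-s) := by
    rw [Real.div_rpow hy.le hx.le]
    field_simp
  rw [h1]
  refine mul_le_mul_of_nonneg_left ?_ (by positivity)
  have hr : 0 < y / x := by positivity
  rw [Real.rpow_def_of_pos hr]
  have h2 := Real.add_one_le_exp (Real.log (y / x) * -s)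
  have h3 := Real.log_le_sub_one_of_pos hr
  have h4 : s * (x - y) / x = - s * (y / x - 1) := by field_simp; ring
  rw [h4]
  nlinarith

/-- The convex weight. -/
noncomputable def gw (M : ℕ) (s : ℝ) (n : ℕ) : ℝ :=
  if M ≤ n then (n : ℝ) ^ (-s) else (M : ℝ) ^ (-s) * (1 + s * (M - n) / M)

lemma gw_of_le {M : ℕ} {s : ℝ} {n : ℕ} (h : n ≤ M) (hM : 0 < M) :
    gw M s n = (M : ℝ) ^ (-s) * (1 + s * (M - n) / M) := by
  rw [gw]
  split_ifs with h'
  · rw [le_antisymm h h']; simp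
  · rfl

lemma gw_of_ge {M : ℕ} {s : ℝ} {n : ℕ} (h : M ≤ n) : gw M s n = (n : ℝ) ^ (-s) := if_pos h

lemma gw_nonneg {M : ℕ} {s : ℝ} (hM : 0 < M) (hs : 0 < s) (n : ℕ) : 0 ≤ gw M s n := by
  rcases le_total n M with h | h
  · rw [gw_of_le h hM]
    have : (0 : ℝ) ≤ M - n := by rw [sub_nonneg]; exact_mod_cast h
    positivity
  · rw [gw_of_ge h]; positivity

lemma gw_anti {M : ℕ} {s : ℝ} (hM : 0 < M) (hs : 0 < s) (n : ℕ) : gw M s (n + 1) ≤ gw M s n := by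
  rcases Nat.lt_or_ge n M with h | h
  · rw [gw_of_le h hM, gw_of_le h.le hM]
    refine mul_le_mul_of_nonneg_left ?_ (by positivity)
    push_cast
    have : s * ((M : ℝ) - (n + 1)) / M ≤ s * (M - n) / M := by gcongr; linarith
    linarith
  · rw [gw_of_ge h, gw_of_ge (by omega)]
    refine Real.rpow_le_rpow_of_nonpos ?_ ?_ (by linarith)
    · exact_mod_cast (by omega : 0 < n)
    · push_cast; linarith

lemma gw_convex {M : ℕ} {s : ℝ} (hM : 0 < M) (hs : 0 < s) (n : ℕ) :
    2 * gw M s (n + 1) ≤ gw M s n + gw M s (n + 2) := by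
  have hM' : (0 : ℝ) < M := by exact_mod_cast hM
  rcases Nat.lt_or_ge n M with h | h
  · have h2 : (M : ℝ) ^ (-s) * (1 + s * (M - (n + 2 : ℕ)) / M) ≤ gw M s (n + 2) := by
      rcases le_total (n + 2) M with h3 | h3
      · rw [gw_of_le h3 hM]
      · rw [gw_of_ge h3]
        exact rpow_tangent hM' (by positivity) hs
    rw [gw_of_le (Nat.succ_le_of_lt h) hM, gw_of_le h.le hM]
    push_cast at h2 ⊢
    refine le_trans (le_of_eq ?_) (add_le_add_right h2 _)
    ring
  · rw [gw_of_ge h, gw_of_ge (by omega), gw_of_ge (by omega)]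
    have hn : (0 : ℝ) < n := by exact_mod_cast (by omega : 0 < n)
    have hn1 : (0 : ℝ) < ((n + 1 : ℕ) : ℝ) := by positivity
    have h1 := rpow_tangent hn1 hn hs
    have h2 := rpow_tangent hn1 (show (0 : ℝ) < ((n + 2 : ℕ) : ℝ) by positivity) hs
    refine le_trans (le_of_eq ?_) (add_le_add h1 h2)
    push_cast
    ring

end ShanksFejer


section ShanksPV

open Finset

variable {p : ℕ} [Fact p.Prime]

lemma char_diff_sum (χ : DirichletCharacter ℂ p) (heven : χ (-1) = 1) (N : ℕ) :
    ∑ i ∈ range N, ∑ j ∈ range N, χ ((i : ZMod p) - j) = 2 * ps2 (fun n => χ n) N := by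
  have hneg : ∀ x, χ (-x) = χ x := fun x => by
    rw [← neg_one_mul, map_mul, heven, one_mul]
  have h0 : χ (0 : ZMod p) = 0 := MulChar.map_zero χ
  induction N with
  | zero => simp [ps2]
  | succ N ih =>
    have h2 : ps2 (fun n => χ n) (N + 1) = ps2 (fun n => χ n) N + ps1 (fun n => χ n) (N + 1) :=
      sum_range_succ _ _
    have h3 : ∑ j ∈ range N, χ ((N : ZMod p) - j) = ps1 (fun n => χ n) (N + 1) := by
      rw [ps1, sum_range_succ', ← sum_range_reflect]
      simp only [Nat.cast_zero, h0, add_zero]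
      refine sum_congr rfl fun j hj => ?_
      rw [mem_range] at hj
      congr 1
      have : ((N - 1 - j : ℕ) + (j + 1) : ℕ) = N := by omega
      rw [sub_eq_iff_eq_add]
      conv_lhs => rw [← this]
      push_cast
      ring
    have h4 : ∑ j ∈ range N, χ ((j : ZMod p) - N) = ps1 (fun n => χ n) (N + 1) := by
      rw [← h3]
      refine sum_congr rfl fun j _ => ?_
      rw [← hneg]; congr 1; ring
    rw [sum_range_succ]
    simp only [sum_range_succ (fun j => χ (_ - ((j : ℕ) : ZMod p)))]
    rw [sum_add_distrib, ih, h3, h4, sub_self, h0, h2]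
    ring

/-- Kernel sums. -/
noncomputable def tsumψ (N : ℕ) (x : ZMod p) : ℂ := ∑ j ∈ range N, ZMod.stdAddChar (N := p) (x * j)

lemma tsumψ_mod (N : ℕ) {x : ZMod p} (hx : x ≠ 0) : tsumψ N x = tsumψ (N % p) x := by
  have hgeo : ∀ N : ℕ, tsumψ N x * (ZMod.stdAddChar (N := p) x - 1) = ZMod.stdAddChar (N := p) (x * N) - 1 := by
    intro N
    have h : ∀ n : ℕ, ZMod.stdAddChar (N := p) (x * n) = (ZMod.stdAddChar (N := p) x) ^ n := by
      intro n
      rw [← AddChar.map_nsmul_eq_pow, nsmul_eq_mul, mul_comm]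
    simp only [tsumψ, h]
    exact geom_sum_mul _ _
  have hne : ZMod.stdAddChar (N := p) x - 1 ≠ 0 := by
    rw [sub_ne_zero]
    intro h
    apply hx
    apply ZMod.injective_stdAddChar (N := p)
    rw [h, AddChar.map_zero_eq_one]
  apply mul_right_cancel₀ hne
  rw [hgeo, hgeo, ZMod.natCast_mod]

lemma normSq_tsumψ (N : ℕ) (x : ZMod p) :
    ((‖tsumψ N x‖ ^ 2 : ℝ) : ℂ) =
      ∑ i ∈ range N, ∑ j ∈ range N, ZMod.stdAddChar (N := p) (x * ((i : ZMod p) - j)) := by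
  rw [← Complex.normSq_eq_norm_sq, ← Complex.mul_conj, tsumψ, map_sum, sum_mul_sum]
  refine sum_congr rfl fun i _ => sum_congr rfl fun j _ => ?_
  rw [← AddChar.map_neg_eq_conj, ← AddChar.map_add_eq_mul]
  congr 1; ring

lemma parseval_small {N : ℕ} (hN : N ≤ p) :
    ∑ x : ZMod p, ‖tsumψ N x‖ ^ 2 = p * N := by
  have hp0 : ((∑ x : ZMod p, ‖tsumψ N x‖ ^ 2 : ℝ) : ℂ) = ((p * N : ℝ) : ℂ) := by
    rw [Complex.ofReal_sum]
    simp only [normSq_tsumψ]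
    rw [sum_comm]
    have : ∀ i ∈ range N, ∑ x : ZMod p, ∑ j ∈ range N, ZMod.stdAddChar (N := p) (x * ((i : ZMod p) - j)) = p := by
      intro i hi
      rw [sum_comm]
      have h1 : ∀ j ∈ range N, ∑ x : ZMod p, ZMod.stdAddChar (N := p) (x * ((i : ZMod p) - j)) =
          if i = j then (p : ℂ) else 0 := by
        intro j hj
        rw [AddChar.sum_mulShift _ (ZMod.isPrimitive_stdAddChar p), ZMod.card]
        rw [mem_range] at hi hj
        have : ((i : ZMod p) - j = 0) ↔ i = j := by
          rw [sub_eq_zero, ZMod.natCast_eq_natCast_iff', Nat.mod_eq_of_lt (by omega), Nat.mod_eq_of_lt (by omega)]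
        simp only [this]
        split_ifs <;> simp
      rw [sum_congr rfl h1, sum_ite_eq, if_pos hi]
    rw [sum_congr rfl this]
    simp [mul_comm]
  exact_mod_cast hp0

lemma parseval_le (N : ℕ) :
    ∑ x ∈ univ.erase (0 : ZMod p), ‖tsumψ N x‖ ^ 2 ≤ p * N := by
  have hp : 0 < p := (Fact.out : p.Prime).pos
  calc ∑ x ∈ univ.erase (0 : ZMod p), ‖tsumψ N x‖ ^ 2
      = ∑ x ∈ univ.erase (0 : ZMod p), ‖tsumψ (N % p) x‖ ^ 2 := by
        refine sum_congr rfl fun x hx => ?_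
        rw [tsumψ_mod N (ne_of_mem_erase hx)]
    _ ≤ ∑ x : ZMod p, ‖tsumψ (N % p) x‖ ^ 2 :=
        sum_le_sum_of_subset_of_nonneg (erase_subset _ _) fun _ _ _ => by positivity
    _ = p * (N % p : ℕ) := parseval_small (Nat.mod_lt _ hp).le
    _ ≤ p * N := by gcongr; exact Nat.mod_le _ _

lemma gauss_shift (χ : DirichletCharacter ℂ p) (hχ : χ ≠ 1) (a : ZMod p) :
    ∑ x : ZMod p, χ⁻¹ x * ZMod.stdAddChar (N := p) (x * a) = χ a * gaussSum χ⁻¹ (ZMod.stdAddChar (N := p)) := by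
  have hχ' : χ⁻¹ ≠ 1 := by rwa [Ne, inv_eq_one]
  rcases eq_or_ne a 0 with rfl | ha
  · have h0 : χ (0 : ZMod p) = 0 := MulChar.map_zero χ
    simp only [mul_zero, AddChar.map_zero_eq_one, mul_one, h0, zero_mul]
    exact MulChar.sum_eq_zero_of_ne_one hχ'
  · have := gaussSum_mulShift_eq χ⁻¹ (ZMod.stdAddChar (N := p)) (Units.mk0 a ha)
    rw [inv_inv, Units.val_mk0] at this
    rw [← this, gaussSum]
    refine sum_congr rfl fun x _ => ?_
    rw [AddChar.mulShift_apply, mul_comm x a]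

lemma gauss_norm (χ : DirichletCharacter ℂ p) (hχ : χ ≠ 1) :
    ‖gaussSum χ (ZMod.stdAddChar (N := p))‖ = √p := by
  have h := gaussSum_mul_gaussSum_eq_card hχ (ZMod.isPrimitive_stdAddChar p)
  rw [← star_gaussSum_eq] at h
  have h2 : ‖gaussSum χ (ZMod.stdAddChar (N := p))‖ ^ 2 = p := by
    have := congrArg norm h
    rw [norm_mul, norm_star, ZMod.card, Complex.norm_natCast] at this
    rw [sq, this]
  rw [← h2, Real.sqrt_sq (norm_nonneg _)]

theorem fejer_bound (χ : DirichletCharacter ℂ p) (hχ : χ ≠ 1) (heven : χ (-1) = 1) (N : ℕ) :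
    ‖ps2 (fun n => χ n) N‖ ≤ √p / 2 * N := by
  have hp : (0 : ℝ) < p := by exact_mod_cast (Fact.out : p.Prime).pos
  have hχ' : χ⁻¹ ≠ 1 := by rwa [Ne, inv_eq_one]
  have h1 : 2 * ps2 (fun n => χ n) N * gaussSum χ⁻¹ (ZMod.stdAddChar (N := p)) =
      ∑ x : ZMod p, χ⁻¹ x * ((‖tsumψ N x‖ ^ 2 : ℝ) : ℂ) := by
    rw [← char_diff_sum χ heven]
    simp only [normSq_tsumψ, mul_sum, sum_mul, ← gauss_shift χ hχ]
    rw [sum_comm, sum_comm]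
    conv_rhs => rw [sum_comm]
    refine sum_congr rfl fun i _ => ?_
    rw [sum_comm]
  have h2 := congrArg norm h1
  rw [norm_mul, norm_mul, gauss_norm _ hχ', Complex.norm_ofNat] at h2
  have h3 : ‖∑ x : ZMod p, χ⁻¹ x * ((‖tsumψ N x‖ ^ 2 : ℝ) : ℂ)‖ ≤ p * N := by
    refine le_trans ?_ (parseval_le (p := p) N)
    have h0 : χ⁻¹ (0 : ZMod p) = 0 := MulChar.map_zero _
    rw [← add_sum_erase _ _ (mem_univ (0 : ZMod p)), h0, zero_mul, zero_add]
    refine (norm_sum_le _ _).trans (sum_le_sum fun x _ => ?_)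
    rw [norm_mul, Complex.norm_real, Real.norm_of_nonneg (by positivity)]
    exact mul_le_of_le_one_left (by positivity) (DirichletCharacter.norm_le_one _ _)
  rw [← h2] at h3
  have hs : 0 < √(p : ℝ) := Real.sqrt_pos.2 hp
  have hss : √(p : ℝ) * √(p : ℝ) = p := Real.mul_self_sqrt hp.le
  have : ‖ps2 (fun n => χ n) N‖ * √(p : ℝ) ≤ (√p / 2 * N) * √(p : ℝ) := by
    calc ‖ps2 (fun n => χ n) N‖ * √(p : ℝ) ≤ p * N / 2 := by linarith
      _ = (√p / 2 * N) * √(p : ℝ) := by linear_combination (-(N : ℝ) / 2) * hss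
  exact le_of_mul_le_mul_right this hs

open Filter Topology

theorem lseries_bound (χ : DirichletCharacter ℂ p) (hχ : χ ≠ 1) (heven : χ (-1) = 1)
    {M : ℕ} (hM : 0 < M) {s : ℝ} (hs : 1 < s) :
    ‖LSeries (fun n => χ n) s‖ ≤
      ‖∑ n ∈ range M, χ n * (((n : ℝ) ^ (-s) - (M : ℝ) ^ (-s) * (1 + s * (M - n) / M) : ℝ) : ℂ)‖
        + √p / 2 * ((M : ℝ) ^ (-s) * (1 + s)) := by
  have hs' : 1 < (s : ℂ).re := by simpa using hs
  have hsum : LSeriesSummable (fun n => χ n) s := DirichletCharacter.LSeriesSummable_of_one_lt_re χ hs'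
  have hterm : ∀ n : ℕ, LSeries.term (fun n => χ n) s n = χ n * (((n : ℝ) ^ (-s) : ℝ) : ℂ) := by
    intro n
    rcases eq_or_ne n 0 with rfl | hn
    · have h0 : χ (0 : ZMod p) = 0 := MulChar.map_zero χ
      simp [h0]
    · rw [LSeries.term_of_ne_zero hn, Complex.ofReal_cpow (by positivity), div_eq_mul_inv]
      push_cast
      rw [Complex.cpow_neg]
  have hten := hsum.hasSum.tendsto_sum_nat.norm
  have hX : Tendsto (fun X : ℕ => ‖∑ n ∈ range M, χ n * (((n : ℝ) ^ (-s) - (M : ℝ) ^ (-s) * (1 + s * (M - n) / M) : ℝ) : ℂ)‖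
        + ((X : ℝ) ^ (-(s - 1)) + √p / 2 * ((M : ℝ) ^ (-s) * (1 + s)))) atTop 
      (𝓝 (‖∑ n ∈ range M, χ n * (((n : ℝ) ^ (-s) - (M : ℝ) ^ (-s) * (1 + s * (M - n) / M) : ℝ) : ℂ)‖
        + (0 + √p / 2 * ((M : ℝ) ^ (-s) * (1 + s))))) := by
    refine Tendsto.const_add _ (Tendsto.add_const _ ?_)
    exact (tendsto_rpow_neg_atTop (by linarith)).comp tendsto_natCast_atTop_atTop
  rw [zero_add] at hX
  refine le_of_tendsto_of_tendsto hten hX ?_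
  filter_upwards [eventually_ge_atTop (M + 1)] with X hX
  have h1 := abel_bound (fun n => χ n) (gw M s) (fejer_bound χ hχ heven) (by positivity)
    (fun n => DirichletCharacter.norm_le_one _ _) (gw_nonneg hM (by linarith)) (gw_anti hM (by linarith))
    (gw_convex hM (by linarith)) X
  have h2 : ∑ n ∈ range X, LSeries.term (fun n => χ n) s n =
      ∑ n ∈ range M, χ n * (((n : ℝ) ^ (-s) - (M : ℝ) ^ (-s) * (1 + s * (M - n) / M) : ℝ) : ℂ) +
      ∑ n ∈ range X, χ n * (gw M s n : ℂ) := by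
    have h3 : ∑ n ∈ range M, χ n * (((n : ℝ) ^ (-s) - (M : ℝ) ^ (-s) * (1 + s * (M - n) / M) : ℝ) : ℂ) =
        ∑ n ∈ range X, χ n * (((n : ℝ) ^ (-s) - gw M s n : ℝ) : ℂ) := by
      rw [← sum_subset (range_mono (by omega : M ≤ X))]
      · refine sum_congr rfl fun n hn => ?_
        rw [gw_of_le (mem_range.1 hn).le hM]
      · intro n _ hn
        rw [mem_range, not_lt] at hn
        rw [gw_of_ge hn]; simp
    rw [h3, ← sum_add_distrib]
    refine sum_congr rfl fun n _ => ?_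
    rw [hterm]; push_cast; ring
  rw [h2]
  refine (norm_add_le _ _).trans (add_le_add_right (h1.trans ?_) _)
  have hX0 : (0 : ℝ) < X := by exact_mod_cast (by omega : 0 < X)
  have hM0 : (0 : ℝ) < M := by exact_mod_cast hM
  rw [gw_of_ge (by omega), gw_of_le (Nat.zero_le M) hM]
  refine le_of_eq ?_
  congr 1
  · rw [show -(s - 1) = 1 + -s by ring, Real.rpow_add hX0, Real.rpow_one]
  · congr 2
    push_cast
    field_simp
    ring

end ShanksPV


section ShanksSum

open Finset

def shT (n : ℕ) : ℕ :=
  Nat.mod (Nat.mul (Nat.pow (Nat.mod (Nat.mul (Nat.pow (Nat.mod (Nat.mul (Nat.pow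
    (Nat.mod (Nat.pow n 47) 298615687) 128) (Nat.pow n 59)) 298615687) 128) (Nat.pow n 45))
    298615687) 128) (Nat.pow n 2)) 298615687

def shW (n : ℕ) : ℕ := Nat.div (Nat.pow (Nat.sub 78400 n) 2) n

def shTerm (n : ℕ) : ℕ :=
  Nat.mul (shW n) (Nat.pow 18446744073709551616 (Nat.mod (shT n) 4))

def shForce (x : ℕ) : ℕ := Nat.rec 0 (fun n _ => shTerm n) x

def shInner (a : ℕ) (N : ℕ) : ℕ :=
  Nat.rec 0 (fun j ih => Nat.add ih (shForce (Nat.add (Nat.add a j) 1))) N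

def shOuter (N : ℕ) : ℕ :=
  Nat.rec 0 (fun i ih => Nat.add ih (shInner (Nat.mul 280 i) 280)) N

set_option maxRecDepth 100000 in
lemma shOuter_val :
    shOuter 280 = 6487987554397865785289412870513517719853309316175 := by decide +kernel

lemma shInner_eq (a N : ℕ) : shInner a N = ∑ j ∈ range N, shTerm (a + j) := by
  induction N with
  | zero => rfl
  | succ N ih => rw [sum_range_succ, ← ih]; rfl

lemma shOuter_eq (N : ℕ) : shOuter N = ∑ n ∈ range (280 * N), shTerm n := by
  induction N with
  | zero => rfl
  | succ N ih =>
    rw [Nat.mul_succ, sum_range_add, ← ih, ← shInner_eq]; rfl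

lemma shSum_val (M : ℕ) (hM : M = 280 * 280) :
    ∑ n ∈ range M, shTerm n = 6487987554397865785289412870513517719853309316175 := by
  rw [hM]
  exact (shOuter_eq 280).symm.trans shOuter_val

lemma shTerm_eq (n : ℕ) : shTerm n = shW n * 18446744073709551616 ^ (shT n % 4) := rfl

lemma bucket_eq (B W k : ℕ) (hk : k = 1 ∨ k = 2 ∨ k = 0) :
    (if k = 0 then W else 0) + B * (if k = 1 then W else 0) + B ^ 2 * (if k = 2 then W else 0)
      = W * B ^ k := by
  rcases hk with h | h | h <;> subst h <;> simp [mul_comm]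

lemma bucket_sum (M B : ℕ) (W k f : ℕ → ℕ) (hf : ∀ n, f n = W n * B ^ k n) (hW : W 0 = 0)
    (hk : ∀ n ∈ range M, n ≠ 0 → k n = 1 ∨ k n = 2 ∨ k n = 0) :
    (∑ n ∈ range M, if k n = 0 then W n else 0) + B * (∑ n ∈ range M, if k n = 1 then W n else 0)
      + B ^ 2 * (∑ n ∈ range M, if k n = 2 then W n else 0) = ∑ n ∈ range M, f n := by
  rw [mul_sum, mul_sum, ← sum_add_distrib, ← sum_add_distrib]
  refine sum_congr rfl fun n hn => ?_
  rw [hf]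
  by_cases h0 : n = 0
  · rw [h0, hW]; simp
  · exact bucket_eq _ _ _ (hk n hn h0)

lemma shT_eq (n : ℕ) : shT n = n ^ 99538562 % 298615687 := by
  have h : shT n = ((((n ^ 47 % 298615687) ^ 128 * n ^ 59 % 298615687) ^ 128 * n ^ 45
    % 298615687) ^ 128 * n ^ 2) % 298615687 := rfl
  rw [h]
  have key : ((((n ^ 47 % 298615687) ^ 128 * n ^ 59 % 298615687) ^ 128 * n ^ 45
    % 298615687) ^ 128 * n ^ 2) ≡ (((n ^ 47) ^ 128 * n ^ 59) ^ 128 * n ^ 45) ^ 128 * n ^ 2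
      [MOD 298615687] := by
    refine Nat.ModEq.mul_right _ (Nat.ModEq.pow _ ?_)
    refine (Nat.mod_modEq _ _).trans (Nat.ModEq.mul_right _ (Nat.ModEq.pow _ ?_))
    refine (Nat.mod_modEq _ _).trans (Nat.ModEq.mul_right _ (Nat.ModEq.pow _ ?_))
    exact Nat.mod_modEq _ _
  rw [key]
  congr 1
  simp only [← pow_mul, ← pow_add]

variable {p : ℕ} [Fact p.Prime]

lemma shanks_chi_cases (hp : p = 298615687) (χ : DirichletCharacter ℂ p) (hχ : χ ^ 3 = 1)
    (n : ℕ) (hn : (n : ZMod p) ≠ 0) :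
    (shT n % 4 = 1 ∧ χ n = 1) ∨ (shT n % 4 = 2 ∧ χ n = χ 3) ∨
      (shT n % 4 = 0 ∧ χ n = χ 3 ^ 2) := by
  have hx := apply_cube χ hχ hn
  have hp' := ‹Fact p.Prime›.out
  have h3 : (3 : ZMod p) ≠ 0 := by
    have : ((3 : ℕ) : ZMod p) ≠ 0 := by
      rw [Ne, ZMod.natCast_eq_zero_iff, hp]; norm_num
    simpa using this
  have hc := apply_cube χ hχ h3
  have hcast : ∀ a b : ℕ, (a : ZMod p) = b ↔ a % p = b % p := fun a b =>
    ZMod.natCast_eq_natCast_iff' a b p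
  set u : ZMod p := (n : ZMod p) ^ 99538562 with hu
  have huT : u = (shT n : ZMod p) := by
    rw [hu, shT_eq, ← hp, ZMod.natCast_mod, Nat.cast_pow]
  have hu3 : u ^ 3 = 1 := by
    rw [hu, ← pow_mul]
    have := ZMod.pow_card_sub_one_eq_one hn
    rwa [show p - 1 = 99538562 * 3 by rw [hp]] at this
  have hw : (3 : ZMod p) ^ 99538562 = (99544322 : ℕ) := by
    have h := zmod_pow_powm p 30 3 99538562 (by norm_num)
    rw [show powm p 30 3 99538562 = 99544322 by rw [hp]; decide +kernel] at h
    rwa [Nat.cast_ofNat] at h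
  have hw2 : ((99544322 : ℕ) : ZMod p) ^ 2 = (199071364 : ℕ) := by
    rw [← Nat.cast_pow, hcast, hp]; norm_num
  have hw1 : ((99544322 : ℕ) : ZMod p) ^ 2 + (99544322 : ℕ) + 1 = 0 := by
    rw [hw2]
    have : ((199071364 + 99544322 + 1 : ℕ) : ZMod p) = 0 := by
      rw [ZMod.natCast_eq_zero_iff, hp]
    simpa only [Nat.cast_add, Nat.cast_one] using this
  have hχu : χ u = χ n ^ 2 := by
    rw [hu, map_pow, show 99538562 = 3 * 33179520 + 2 from rfl, pow_add, pow_mul, hx, one_pow,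
      one_mul]
  have hχw : χ ((99544322 : ℕ) : ZMod p) = χ 3 ^ 2 := by
    rw [← hw, map_pow, show 99538562 = 3 * 33179520 + 2 from rfl, pow_add, pow_mul, hc, one_pow,
      one_mul]
  have hT : ∀ b : ℕ, b < 298615687 → u = b → shT n = b := by
    intro b hb h
    rw [huT, hcast, hp, Nat.mod_eq_of_lt hb, Nat.mod_eq_of_lt] at h
    · exact h
    · rw [shT_eq]; exact Nat.mod_lt _ (by norm_num)
  have hsq : ∀ y : ℂ, y ^ 3 = 1 → χ n ^ 2 = y ^ 2 → χ n = y := by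
    intro y hy h
    linear_combination (-χ n) * hx + y * hy + (χ n ^ 2 + y ^ 2) * h
  have hprod : (u - 1) * ((u - (99544322 : ℕ)) * (u - (199071364 : ℕ))) = 0 := by
    rw [← hw2]
    generalize ((99544322 : ℕ) : ZMod p) = w at *
    linear_combination hu3 + (u - 1) * (-u + w - 1) * hw1
  rcases mul_eq_zero.mp hprod with h | h
  · left
    have h1 : u = 1 := sub_eq_zero.mp h
    refine ⟨by rw [hT 1 (by norm_num) (by simpa using h1)], hsq 1 (by norm_num) ?_⟩
    rw [← hχu, h1]; simp
  rcases mul_eq_zero.mp h with h | h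
  · right; left
    have h1 := sub_eq_zero.mp h
    refine ⟨by rw [hT _ (by norm_num) h1], hsq _ hc ?_⟩
    rw [← hχu, h1, hχw]
  · right; right
    have h1 := sub_eq_zero.mp h
    refine ⟨by rw [hT _ (by norm_num) h1], hsq _ (by rw [← pow_mul, mul_comm, pow_mul, hc, one_pow]) ?_⟩
    rw [← hχu, h1, ← hw2, map_pow, hχw]

lemma shanks_chi_three (hp : p = 298615687) (χ : DirichletCharacter ℂ p) (hχ : χ ^ 3 = 1)
    (hχ1 : χ ≠ 1) : χ 3 ^ 2 + χ 3 + 1 = 0 := by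
  have h3 : (3 : ZMod p) ≠ 0 := by
    have : ((3 : ℕ) : ZMod p) ≠ 0 := by
      rw [Ne, ZMod.natCast_eq_zero_iff, hp]; norm_num
    simpa using this
  have hc := apply_cube χ hχ h3
  have h1 : χ 3 ≠ 1 := by
    intro h
    apply hχ1
    ext x
    have hx : ((x : ZMod p).val : ZMod p) ≠ 0 := by
      rw [ZMod.natCast_zmod_val]; exact x.ne_zero
    have := shanks_chi_cases hp χ hχ (x : ZMod p).val hx
    rw [ZMod.natCast_zmod_val, h] at this
    rw [MulChar.one_apply_coe]
    rcases this with h | h | h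
    · exact h.2
    · exact h.2
    · simpa using h.2
  have : (χ 3 - 1) * (χ 3 ^ 2 + χ 3 + 1) = 0 := by linear_combination hc
  exact (mul_eq_zero.mp this).resolve_left (sub_ne_zero.mpr h1)

lemma shW_eq (n : ℕ) : shW n = (78400 - n) ^ 2 / n := rfl

lemma norm_cubic (c : ℂ) (hc : c ^ 2 + c + 1 = 0) (a b d : ℝ) :
    ‖(a : ℂ) + b * c + d * c ^ 2‖ ^ 2 = a ^ 2 + b ^ 2 + d ^ 2 - a * b - b * d - d * a := by
  have h1 : (a : ℂ) + b * c + d * c ^ 2 = ((a - d : ℝ) : ℂ) + ((b - d : ℝ) : ℂ) * c := by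
    push_cast
    linear_combination d * hc
  have hre := congrArg Complex.re hc
  have him := congrArg Complex.im hc
  simp [pow_two] at hre him
  rw [h1, ← Complex.normSq_eq_norm_sq, Complex.normSq_apply]
  simp only [Complex.add_re, Complex.add_im, Complex.re_ofReal_mul, Complex.im_ofReal_mul,
    Complex.ofReal_re, Complex.ofReal_im]
  generalize c.re = x at *
  generalize c.im = y at *
  have hx : x = -1 / 2 := by
    have : y * (2 * x + 1) = 0 := by linear_combination him
    rcases mul_eq_zero.mp this with h | h
    · rw [h] at hre; nlinarith [sq_nonneg (x + 1 / 2)]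
    · linarith
  subst hx
  have hy : y * y = 3 / 4 := by linarith
  linear_combination (b - d) ^ 2 * hy

lemma shanks_sum_int (hp : p = 298615687) (χ : DirichletCharacter ℂ p) (hχ : χ ^ 3 = 1)
    (hχ1 : χ ≠ 1) (M : ℕ) (hM : M = 78400) : ‖∑ n ∈ range M, χ n * (shW n : ℂ)‖ ≤ 0.58895 * 78400 ^ 2 := by
  have hcs : ∀ n ∈ range M, n ≠ 0 → (shT n % 4 = 1 ∧ χ n = 1) ∨
      (shT n % 4 = 2 ∧ χ n = χ 3) ∨ (shT n % 4 = 0 ∧ χ n = χ 3 ^ 2) := by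
    intro n hn h0
    apply shanks_chi_cases hp χ hχ
    rw [Ne, ZMod.natCast_eq_zero_iff, hp]
    intro h
    have := Nat.le_of_dvd (Nat.pos_of_ne_zero h0) h
    have := mem_range.mp hn
    omega
  have hW0 : shW 0 = 0 := by rw [shW_eq]; simp
  obtain ⟨A, hA⟩ : ∃ A : ℕ → ℕ, ∀ k, A k = ∑ n ∈ range M, if shT n % 4 = k then shW n else 0 :=
    ⟨_, fun _ => rfl⟩
  have hlt : ∀ k, A k < 18446744073709551616 := by
    intro k
    have : A k ≤ ∑ n ∈ range M, 78400 ^ 2 := by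
      rw [hA]
      apply sum_le_sum
      intro n _
      split_ifs
      · rw [shW_eq]
        exact (Nat.div_le_self _ _).trans (Nat.pow_le_pow_left (Nat.sub_le _ _) _)
      · simp
    rw [sum_const, card_range, smul_eq_mul, hM] at this
    norm_num at this
    omega
  have htot : A 0 + 18446744073709551616 * A 1 + 18446744073709551616 ^ 2 * A 2
      = 6487987554397865785289412870513517719853309316175 := by
    rw [← shSum_val M (by rw [hM]), hA, hA, hA]
    exact bucket_sum M 18446744073709551616 shW (fun n => shT n % 4) shTerm shTerm_eq hW0
      (fun n hn h0 => (hcs n hn h0).imp And.left (Or.imp And.left And.left))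
  have hsum : ∑ n ∈ range M, χ n * (shW n : ℂ)
      = ((A 1 : ℝ) : ℂ) + ((A 2 : ℝ) : ℂ) * χ 3 + ((A 0 : ℝ) : ℂ) * χ 3 ^ 2 := by
    rw [hA, hA, hA]
    push_cast
    rw [sum_mul, sum_mul, ← sum_add_distrib, ← sum_add_distrib]
    apply sum_congr rfl
    intro n hn
    by_cases h0 : n = 0
    · rw [h0, hW0]; simp
    rcases hcs n hn h0 with h | h | h <;> rw [h.1, h.2] <;> simp [mul_comm]
  have h0 := hlt 0
  have h1 := hlt 1
  have h2 := hlt 2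
  have e0 : A 0 = 21287095375 := by omega
  have e1 : A 1 = 23243657714 := by omega
  have e2 : A 2 = 19066481796 := by omega
  rw [hsum, e0, e1, e2]
  apply le_of_sq_le_sq _ (by norm_num)
  rw [norm_cubic _ (shanks_chi_three hp χ hχ hχ1)]
  norm_num

lemma shanks_sum_real (hp : p = 298615687) (χ : DirichletCharacter ℂ p) (hχ : χ ^ 3 = 1)
    (hχ1 : χ ≠ 1) :
    ‖∑ n ∈ range 78400, χ n * (((n : ℝ)⁻¹ - (78400 : ℝ)⁻¹ * (1 + (78400 - n) / 78400) : ℝ) : ℂ)‖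
      ≤ 0.58897 := by
  have hmain := shanks_sum_int hp χ hχ hχ1 78400 rfl
  have hdiff : ‖∑ n ∈ range 78400, χ n * (((n : ℝ)⁻¹ - (78400 : ℝ)⁻¹ * (1 + (78400 - n) / 78400) : ℝ) : ℂ)
      - (∑ n ∈ range 78400, χ n * (shW n : ℂ)) / 78400 ^ 2‖ ≤ ∑ n ∈ range 78400, (1 / 78400 ^ 2 : ℝ) := by
    rw [sum_div, ← sum_sub_distrib]
    refine (norm_sum_le _ _).trans (sum_le_sum ?_)
    intro n hn
    by_cases h0 : n = 0
    · subst h0; simp [show χ (0 : ZMod p) = 0 from MulChar.map_zero χ]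
    have hnM : n < 78400 := mem_range.mp hn
    have hnp : (0 : ℝ) < n := by exact_mod_cast Nat.pos_of_ne_zero h0
    rw [mul_div_assoc, ← mul_sub, norm_mul]
    have e1 : (((n : ℝ)⁻¹ - (78400 : ℝ)⁻¹ * (1 + (78400 - n) / 78400) : ℝ) : ℂ) - (shW n : ℂ) / 78400 ^ 2
        = (((((78400 - n) ^ 2 / n - shW n) / 78400 ^ 2 : ℝ)) : ℂ) := by
      have : (n : ℂ) ≠ 0 := by exact_mod_cast h0
      push_cast
      field_simp
      ring
    rw [e1, Complex.norm_real, Real.norm_eq_abs]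
    have hlo : (shW n : ℝ) ≤ (78400 - n) ^ 2 / n := by
      have := Nat.cast_div_le (m := (78400 - n) ^ 2) (n := n) (α := ℝ)
      rw [← shW_eq] at this
      push_cast [Nat.cast_sub hnM.le] at this
      exact this
    have hhi : ((78400 - n) ^ 2 / n : ℝ) ≤ shW n + 1 := by
      have := Nat.lt_div_mul_add (a := (78400 - n) ^ 2) (Nat.pos_of_ne_zero h0)
      rw [← shW_eq] at this
      have h2 : (((78400 - n) ^ 2 : ℕ) : ℝ) < (shW n * n + n : ℕ) := by exact_mod_cast this
      push_cast [Nat.cast_sub hnM.le] at h2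
      rw [div_le_iff₀ hnp]
      linarith
    have hab : |((78400 - n) ^ 2 / n - shW n : ℝ) / 78400 ^ 2| ≤ 1 / 78400 ^ 2 := by
      rw [abs_of_nonneg (div_nonneg (by linarith) (by norm_num))]
      gcongr
      linarith
    calc _ ≤ 1 * |((78400 - n) ^ 2 / n - shW n : ℝ) / 78400 ^ 2| :=
          mul_le_mul_of_nonneg_right (DirichletCharacter.norm_le_one χ _) (abs_nonneg _)
      _ ≤ _ := by rw [one_mul]; exact hab
  rw [sum_const, card_range, nsmul_eq_mul] at hdiff
  have h2 : ‖(∑ n ∈ range 78400, χ n * (shW n : ℂ)) / 78400 ^ 2‖ ≤ 0.58895 := by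
    rw [norm_div, norm_pow, Complex.norm_ofNat, div_le_iff₀ (by norm_num)]
    exact hmain
  have h3 := norm_add_le (∑ n ∈ range 78400, χ n * (((n : ℝ)⁻¹ - (78400 : ℝ)⁻¹ * (1 + (78400 - n) / 78400) : ℝ) : ℂ)
      - (∑ n ∈ range 78400, χ n * (shW n : ℂ)) / 78400 ^ 2) ((∑ n ∈ range 78400, χ n * (shW n : ℂ)) / 78400 ^ 2)
  rw [sub_add_cancel] at h3
  refine h3.trans ((add_le_add hdiff h2).trans ?_)
  norm_num

end ShanksSum


section ShanksFinal

open Finset Filter Topology NumberField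

lemma char_sum_tendsto {p : ℕ} [Fact p.Prime] (χ : DirichletCharacter ℂ p) {M : ℕ} (hM : 0 < M) :
    Tendsto (fun s : ℝ => ‖∑ n ∈ range M, χ n *
        (((n : ℝ) ^ (-s) - (M : ℝ) ^ (-s) * (1 + s * (M - n) / M) : ℝ) : ℂ)‖ +
        √p / 2 * ((M : ℝ) ^ (-s) * (1 + s))) (𝓝[>] 1)
      (𝓝 (‖∑ n ∈ range M, χ n * (((n : ℝ)⁻¹ - (M : ℝ)⁻¹ * (1 + (M - n) / M) : ℝ) : ℂ)‖ +
        √p / 2 * ((M : ℝ)⁻¹ * (1 + 1)))) := by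
  have hpow : ∀ n : ℕ, n ≠ 0 → Tendsto (fun s : ℝ => (n : ℝ) ^ (-s)) (𝓝[>] 1) (𝓝 (n : ℝ)⁻¹) := by
    intro n hn
    have hc : ContinuousAt (fun s : ℝ => (n : ℝ) ^ (-s)) 1 :=
      ContinuousAt.rpow continuousAt_const continuousAt_id.neg
        (Or.inl (by exact_mod_cast hn))
    have := hc.tendsto
    simp only [Real.rpow_neg_one] at this
    exact this.mono_left nhdsWithin_le_nhds
  have hid : Tendsto (fun s : ℝ => s) (𝓝[>] 1) (𝓝 1) := tendsto_id.mono_left nhdsWithin_le_nhds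
  have hMp := hpow M hM.ne'
  refine Tendsto.add (Tendsto.norm (tendsto_finsetSum _ ?_))
    (tendsto_const_nhds.mul (hMp.mul (tendsto_const_nhds.add hid)))
  intro n _
  by_cases h0 : n = 0
  · subst h0
    have : χ ((0 : ℕ) : ZMod p) = 0 := by rw [Nat.cast_zero]; exact MulChar.map_zero χ
    simp only [this, zero_mul]
    exact tendsto_const_nhds
  · refine tendsto_const_nhds.mul ?_
    refine (Complex.continuous_ofReal.tendsto _).comp ?_
    refine (hpow n h0).sub (hMp.mul (tendsto_const_nhds.add ?_))
    have := (hid.mul_const ((M : ℝ) - n)).div_const (M : ℝ)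
    simpa only [one_mul] using this

variable {K : Type*} [Field K] [NumberField K] {α : K}

lemma shanks_residue_le (hα : α ^ 3 - 17279 * α ^ 2 - 17282 * α - 1 = 0)
    (hgen : Algebra.adjoin ℚ {α} = ⊤) (θ : 𝓞 K) (hθ : (θ : K) = α)
    {p : ℕ} [Fact p.Prime] (hp : p = 298615687) (M : ℕ) (hM : M = 78400) :
    dedekindZeta_residue K ≤ (1 - (p : ℝ)⁻¹)⁻¹ ^ 2 * (1 * 0.80944 ^ 2) := by
  obtain ⟨χ, hχ⟩ : ∃ χ : MulChar (ZMod p) ℂ, orderOf χ = 3 := by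
    refine MulChar.exists_mulChar_orderOf (ZMod p) ?_ (Complex.isPrimitiveRoot_exp 3 (by norm_num))
    rw [ZMod.card, hp]
    norm_num
  have hχ3 : χ ^ 3 = 1 := by rw [← hχ]; exact pow_orderOf_eq_one χ
  have hχ1 : χ ≠ 1 := by
    rintro rfl
    rw [orderOf_one] at hχ
    omega
  have heven := shanks_even χ hχ3
  have hM0 : 0 < M := by omega
  have hG := char_sum_tendsto χ hM0
  have hL1 : Tendsto (fun s : ℝ => ‖((s : ℂ) - 1) * dedekindZeta K s‖) (𝓝[>] 1)
      (𝓝 ‖(dedekindZeta_residue K : ℂ)‖) :=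
    (tendsto_sub_one_mul_dedekindZeta_nhdsGT K).norm
  have hZ : Tendsto (fun s : ℝ => ‖((s : ℂ) - 1) * riemannZeta s‖) (𝓝[>] 1) (𝓝 1) := by
    have h1 : Tendsto (fun s : ℝ => (s : ℂ)) (𝓝[>] 1) (𝓝[≠] 1) := by
      refine tendsto_nhdsWithin_iff.mpr ⟨?_, ?_⟩
      · have := Complex.continuous_ofReal.tendsto (1 : ℝ)
        rw [Complex.ofReal_one] at this
        exact this.mono_left nhdsWithin_le_nhds
      · filter_upwards [self_mem_nhdsWithin] with s hs
        have : (1 : ℝ) < s := hs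
        have h2 : s ≠ 1 := this.ne'
        simpa using h2
    have := (riemannZeta_residue_one.comp h1).norm
    simpa using this
  have hE : Tendsto (fun s : ℝ => (1 - (p : ℝ) ^ (-s))⁻¹ ^ 2) (𝓝[>] 1)
      (𝓝 ((1 - (p : ℝ)⁻¹)⁻¹ ^ 2)) := by
    have hp0 : (p : ℝ) ≠ 0 := by rw [hp]; norm_num
    have hc : ContinuousAt (fun s : ℝ => (p : ℝ) ^ (-s)) 1 :=
      ContinuousAt.rpow continuousAt_const continuousAt_id.neg (Or.inl hp0)
    have h1 := hc.tendsto.mono_left (nhdsWithin_le_nhds (s := Set.Ioi 1))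
    simp only [Real.rpow_neg_one] at h1
    refine ((tendsto_const_nhds.sub h1).inv₀ ?_).pow 2
    rw [hp]; norm_num
  have hlim := le_of_tendsto_of_tendsto hL1 (hE.mul (hZ.mul (hG.pow 2))) (by
    filter_upwards [self_mem_nhdsWithin] with s hs
    have hs1 : (1 : ℝ) < s := hs
    have h1 := shanks_zeta_le hα hgen hp χ hχ θ hθ hs1
    have h2 := lseries_bound χ hχ1 heven hM0 hs1
    rw [norm_mul, norm_mul]
    calc ‖(s : ℂ) - 1‖ * ‖dedekindZeta K s‖
        ≤ ‖(s : ℂ) - 1‖ * ((1 - (p : ℝ) ^ (-s))⁻¹ ^ 2 *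
          (‖riemannZeta s‖ * ‖LSeries (fun n => χ n) s‖ ^ 2)) := by gcongr
      _ = (1 - (p : ℝ) ^ (-s))⁻¹ ^ 2 * (‖(s : ℂ) - 1‖ * ‖riemannZeta s‖ *
          ‖LSeries (fun n => χ n) s‖ ^ 2) := by ring
      _ ≤ _ := by gcongr)
  have hb : ‖∑ n ∈ range M, χ n * (((n : ℝ)⁻¹ - (M : ℝ)⁻¹ * (1 + (M - n) / M) : ℝ) : ℂ)‖
      ≤ 0.58897 := by
    have hMr : (M : ℝ) = 78400 := by rw [hM]; norm_num
    have := shanks_sum_real hp χ hχ3 hχ1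
    rw [← hM] at this
    rw [hMr]
    exact this
  have hsq : √(p : ℝ) ≤ 17281 := by
    rw [Real.sqrt_le_left (by norm_num), hp]; norm_num
  have hc : ‖∑ n ∈ range M, χ n * (((n : ℝ)⁻¹ - (M : ℝ)⁻¹ * (1 + (M - n) / M) : ℝ) : ℂ)‖ +
      √p / 2 * ((M : ℝ)⁻¹ * (1 + 1)) ≤ 0.80944 := by
    have hMr : (M : ℝ)⁻¹ = 1 / 78400 := by rw [hM]; norm_num
    have : √(p : ℝ) / 2 * ((M : ℝ)⁻¹ * (1 + 1)) ≤ 17281 / 78400 := by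
      rw [hMr]; linarith
    refine (add_le_add hb this).trans ?_
    norm_num
  rw [Complex.norm_real] at hlim
  refine (Real.le_norm_self _).trans (hlim.trans ?_)
  gcongr

lemma shanks_classNumber_lt (hα : α ^ 3 - 17279 * α ^ 2 - 17282 * α - 1 = 0)
    (hgen : Algebra.adjoin ℚ {α} = ⊤) (θ : 𝓞 K) (hθ : (θ : K) = α) :
    classNumber K < 540800 := by
  obtain ⟨p, hp⟩ : ∃ p : ℕ, p = 298615687 := ⟨_, rfl⟩
  haveI : Fact p.Prime := ⟨hp ▸ shanks_prime⟩
  have h1 := shanks_residue_le hα hgen θ hθ hp 78400 rfl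
  have h2 := shanks_residue hα hgen θ hθ
  have h3 := shanks_regulator hα hgen θ hθ
  by_contra! h
  have h4 : (540800 : ℝ) ≤ classNumber K := by exact_mod_cast h
  rw [h2, hp] at h1
  have h5 : (94 : ℝ) * 540800 ≤ Units.regulator K * classNumber K :=
    mul_le_mul h3 h4 (by norm_num) (by linarith)
  norm_num at h1
  linarith

theorem shanks_main (hα : α ^ 3 - 17279 * α ^ 2 - 17282 * α - 1 = 0)
    (hgen : Algebra.adjoin ℚ {α} = ⊤) :
    Nat.card {c : ClassGroup (𝓞 K) // c ^ 2 = 1} = 2 ^ 6 := by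
  obtain ⟨θ, hθ⟩ : ∃ θ : 𝓞 K, (θ : K) = α := ⟨⟨α, shanks_isIntegral hα⟩, rfl⟩
  have hT := shanks_two_torsion hα hgen θ hθ
  have h5 := shanks_five hα hgen θ hθ
  have h13 := shanks_thirteen hα hgen θ hθ
  have hlt := shanks_classNumber_lt hα hgen θ hθ
  have hcn : classNumber K = Nat.card (ClassGroup (𝓞 K)) := by
    rw [classNumber, Nat.card_eq_fintype_card]
  rw [hcn] at hlt
  have hpos : 0 < Nat.card (ClassGroup (𝓞 K)) := Nat.card_pos
  have hset : Nat.card {c : ClassGroup (𝓞 K) // c ^ 2 = 1}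
      = Nat.card (powMonoidHom 2 : ClassGroup (𝓞 K) →* ClassGroup (𝓞 K)).ker :=
    Nat.card_congr (Equiv.subtypeEquivRight fun c => by
      rw [MonoidHom.mem_ker, powMonoidHom_apply])
  rw [hset]
  have hdvd : Nat.card (powMonoidHom 2 : ClassGroup (𝓞 K) →* ClassGroup (𝓞 K)).ker
      ∣ Nat.card (ClassGroup (𝓞 K)) := Subgroup.card_subgroup_dvd_card _
  have hpg : IsPGroup 2 (powMonoidHom 2 : ClassGroup (𝓞 K) →* ClassGroup (𝓞 K)).ker := by
    rintro ⟨c, hc⟩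
    refine ⟨1, ?_⟩
    rw [MonoidHom.mem_ker, powMonoidHom_apply] at hc
    ext1
    simpa using hc
  obtain ⟨k, hk⟩ := IsPGroup.iff_card.mp hpg
  rw [hk] at hT hdvd ⊢
  have h6 : 6 ≤ k := (Nat.pow_dvd_pow_iff_le_right (by norm_num)).mp hT
  have hco : Nat.Coprime (2 ^ k) (25 * 169) := Nat.Coprime.pow_left _ (by norm_num)
  have hd2 : 25 * 169 ∣ Nat.card (ClassGroup (𝓞 K)) :=
    Nat.Coprime.mul_dvd_of_dvd_of_dvd (by norm_num) h5 h13
  have hle := Nat.le_of_dvd hpos (hco.mul_dvd_of_dvd_of_dvd hdvd hd2)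
  congr 1
  by_contra hne
  have h7 : 7 ≤ k := by omega
  have : 2 ^ 7 ≤ 2 ^ k := Nat.pow_le_pow_right (by norm_num) h7
  omega

end ShanksFinal


/-- Let `K = ℚ(α)` where `α` is a root of `x³ - 17279x² - 17282x - 1`
(Shanks' cubic with `a = 17279`). Then the `2`-rank of the class group of `K`
is `6`: the subgroup of ideal classes of order dividing `2` has cardinality `2⁶`. -/
theorem shanks_field_class_group_two_rank (K : Type*) [Field K] [NumberField K]
    (α : K) (hα : α ^ 3 - 17279 * α ^ 2 - 17282 * α - 1 = 0)
    (hgen : Algebra.adjoin ℚ {α} = ⊤) :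
    Nat.card {c : ClassGroup (NumberField.RingOfIntegers K) // c ^ 2 = 1} = 2 ^ 6 := by
  exact shanks_main hα hgen
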